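/- arXiv:2006.15937 — 6 statements merged into one kernel-verified Lean document; each statement's English description precedes it below -/
import Mathlib

section
/- Let α be an irrational real number and let R_α : 𝕊¹ → 𝕊¹ be the rotation R_α(x) = x + α on the circle 𝕊¹ = ℝ/ℤ. Let δ̄ > 0 and let (T_δ)_{δ ∈ [0, δ̄]} be a family of Borel measurable maps T_δ : 𝕊¹ → 𝕊¹ such that sup_{x ∈ 𝕊¹} d(R_α(x), T_δ(x)) ≤ δ for every δ. For each δ, let μ_δ be a T_δ-invariant Borel probability measure. Then W(m, μ_δ) → 0 as δ → 0. -/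
/-! For each nonzero frequency `n`, invariance of `μ_δ` under `T_δ` gives
`(e_n(α) - 1) ∫ e_n dμ_δ = ∫ (e_n(x + α) - e_n(T_δ x)) dμ_δ`. The right side tends to `0` because
`e_n` is uniformly continuous and `T_δ` is `δ`-close to the rotation, while `e_n(α) ≠ 1` because
`α` is irrational. Hence every nonzero Fourier coefficient of `μ_δ` tends to `0`, and density of
the trigonometric polynomials gives weak convergence `μ_δ → m` (`tendsto_integral_of_fourier`).

Weak convergence is uniform over the test functions defining `W`, since by Arzelà–Ascoli they form
a totally bounded set in the sup norm (`tendsto_W_of_tendsto_integral`). -/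

open MeasureTheory Filter Topology

/-- The Wasserstein–Monge–Kantorovich (bounded-Lipschitz) distance between two Borel
measures on the circle `ℝ/ℤ`:
`W(μ,ν) = sup { |∫ g dμ − ∫ g dν| : Lip(g) ≤ 1, ‖g‖_∞ ≤ 1 }`. -/
noncomputable def W (μ ν : Measure (AddCircle (1:ℝ))) : ℝ :=
  ⨆ g : {g : AddCircle (1:ℝ) → ℝ // LipschitzWith 1 g ∧ ∀ x, |g x| ≤ 1},
    |(∫ x, g.1 x ∂μ) - ∫ x, g.1 x ∂ν|

/-- The integral against a probability measure is `1`-Lipschitz for the sup norm. -/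
lemma norm_integral_sub_le_of_close {E : Type*} [NormedAddCommGroup E] [NormedSpace ℝ E]
    [SecondCountableTopology E]
    (ν : Measure (AddCircle (1:ℝ))) [IsProbabilityMeasure ν] {f g : AddCircle (1:ℝ) → E}
    (hf : Continuous f) (hg : Continuous g) {ε : ℝ} (h : ∀ x, ‖f x - g x‖ ≤ ε) :
    ‖(∫ x, f x ∂ν) - ∫ x, g x ∂ν‖ ≤ ε := by
  have hfi : Integrable f ν := hf.integrable_of_hasCompactSupport (.of_compactSpace f)
  have hgi : Integrable g ν := hg.integrable_of_hasCompactSupport (.of_compactSpace g)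
  rw [← integral_sub hfi hgi]
  simpa using norm_integral_le_of_norm_le_const (μ := ν) (Eventually.of_forall h)

instance isProbabilityMeasure_volume_circle :
    IsProbabilityMeasure (volume : Measure (AddCircle (1:ℝ))) :=
  ⟨by simp [AddCircle.measure_univ]⟩

lemma fourier_irrational_ne_one {α : ℝ} (hα : Irrational α) {n : ℤ} (hn : n ≠ 0) :
    fourier n (α : AddCircle (1:ℝ)) ≠ 1 := by
  intro h
  have h1 : AddCircle.toCircle (n • (α : AddCircle (1:ℝ))) =
      AddCircle.toCircle (0 : AddCircle (1:ℝ)) := by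
    apply Subtype.ext
    rw [← fourier_apply, h, AddCircle.toCircle_zero]
    rfl
  have h2 := AddCircle.injective_toCircle (T := (1:ℝ)) one_ne_zero h1
  rw [← AddCircle.coe_zsmul, AddCircle.coe_eq_zero_iff] at h2
  obtain ⟨m, hm⟩ := h2
  have h3 : (n : ℝ) * α = m := by simpa using hm.symm
  exact (hα.intCast_mul hn).ne_int m h3

/-- Probability measures whose nonzero Fourier coefficients tend to `0` converge weakly to
Lebesgue measure. -/
lemma tendsto_integral_of_fourier {ι : Type*} {l : Filter ι} {μ : ι → Measure (AddCircle (1:ℝ))}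
    (hp : ∀ᶠ δ in l, IsProbabilityMeasure (μ δ))
    (h : ∀ n : ℤ, n ≠ 0 → Tendsto (fun δ => ∫ x, fourier n x ∂(μ δ)) l (𝓝 0))
    (f : C(AddCircle (1:ℝ), ℂ)) :
    Tendsto (fun δ => ∫ x, f x ∂(μ δ)) l (𝓝 (∫ x, f x)) := by
  have key : ∀ p ∈ Submodule.span ℂ (Set.range (@fourier (1:ℝ))),
      Tendsto (fun δ => ∫ x, p x ∂(μ δ)) l (𝓝 (∫ x, p x)) := by
    have hint : ∀ (ν : Measure (AddCircle (1:ℝ))) [IsProbabilityMeasure ν]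
        (g : C(AddCircle (1:ℝ), ℂ)), Integrable g ν := fun ν _ g =>
      g.continuous.integrable_of_hasCompactSupport (.of_compactSpace g)
    intro p hpm
    induction hpm using Submodule.span_induction with
    | mem p hpm =>
      obtain ⟨n, rfl⟩ := hpm
      by_cases hn : n = 0
      · subst hn
        refine tendsto_const_nhds.congr' ?_
        filter_upwards [hp] with δ hδ
        simp
      · rw [integral_eq_zero_of_add_right_eq_neg (fourier_add_half_inv_index hn one_pos)]
        exact h n hn
    | zero => simpa using tendsto_const_nhds
    | add p q _ _ hp' hq' =>
      simp only [ContinuousMap.add_apply]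
      rw [integral_add (hint _ p) (hint _ q)]
      refine (hp'.add hq').congr' ?_
      filter_upwards [hp] with δ hδ
      rw [integral_add (hint _ p) (hint _ q)]
    | smul c p _ hp' =>
      simp only [ContinuousMap.smul_apply, integral_smul]
      exact hp'.const_smul c
  rw [Metric.tendsto_nhds]
  intro ε hε
  have hf : f ∈ (Submodule.span ℂ (Set.range (@fourier (1:ℝ)))).topologicalClosure := by
    rw [span_fourier_closure_eq_top]; trivial
  obtain ⟨p, hpm, hpf⟩ := Metric.mem_closure_iff.1 hf (ε / 3) (by positivity)
  have hc : ∀ x, ‖f x - p x‖ ≤ ε / 3 := fun x => by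
    rw [← dist_eq_norm]; exact (ContinuousMap.dist_apply_le_dist x).trans hpf.le
  filter_upwards [hp, Metric.tendsto_nhds.1 (key p hpm) (ε / 3) (by positivity)] with δ hδ h2
  have h1 := norm_integral_sub_le_of_close (μ δ) f.continuous p.continuous hc
  have h3 := norm_integral_sub_le_of_close volume f.continuous p.continuous hc
  rw [← dist_eq_norm] at h1 h3
  rw [dist_comm] at h3
  linarith [dist_triangle4 (∫ x, f x ∂(μ δ)) (∫ x, p x ∂(μ δ)) (∫ x, p x) (∫ x, f x)]

/-- Arzelà–Ascoli: the test functions in the definition of `W` have finite `ε`-nets. -/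
lemma exists_finite_net {ε : ℝ} (hε : 0 < ε) :
    ∃ t : Set (BoundedContinuousFunction (AddCircle (1:ℝ)) ℝ), t.Finite ∧
      ∀ g : AddCircle (1:ℝ) → ℝ, LipschitzWith 1 g → (∀ x, |g x| ≤ 1) →
        ∃ p ∈ t, ∀ x, ‖g x - p x‖ ≤ ε := by
  let A : Set (BoundedContinuousFunction (AddCircle (1:ℝ)) ℝ) :=
    {g | LipschitzWith 1 g ∧ ∀ x, |g x| ≤ 1}
  have hA : IsCompact (closure A) := by
    refine BoundedContinuousFunction.arzela_ascoli (Set.Icc (-1) 1) isCompact_Icc A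
      (fun f x hf => abs_le.1 (hf.2 x)) ?_
    exact (LipschitzWith.uniformEquicontinuous _ 1 fun g => g.2.1).equicontinuous
  obtain ⟨t, -, htf, ht⟩ := hA.finite_cover_balls hε
  refine ⟨t, htf, fun g hg hg1 => ?_⟩
  let G := BoundedContinuousFunction.mkOfCompact ⟨g, hg.continuous⟩
  have hG : G ∈ closure A := subset_closure ⟨hg, hg1⟩
  obtain ⟨p, hp, hGp⟩ := Set.mem_iUnion₂.1 (ht hG)
  refine ⟨p, hp, fun x => ?_⟩
  rw [← dist_eq_norm]
  exact (BoundedContinuousFunction.dist_coe_le_dist (f := G) (g := p) x).trans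
    (Metric.mem_ball.1 hGp).le

/-- Weak convergence to Lebesgue measure implies convergence for `W`. -/
lemma tendsto_W_of_tendsto_integral {ι : Type*} {l : Filter ι}
    {μ : ι → Measure (AddCircle (1:ℝ))}
    (hp : ∀ᶠ δ in l, IsProbabilityMeasure (μ δ))
    (h : ∀ f : C(AddCircle (1:ℝ), ℂ), Tendsto (fun δ => ∫ x, f x ∂(μ δ)) l (𝓝 (∫ x, f x))) :
    Tendsto (fun δ => W volume (μ δ)) l (𝓝 0) := by
  have hreal : ∀ f : BoundedContinuousFunction (AddCircle (1:ℝ)) ℝ,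
      Tendsto (fun δ => ∫ x, f x ∂(μ δ)) l (𝓝 (∫ x, f x)) := by
    intro f
    have := h ⟨fun x => (f x : ℂ), by fun_prop⟩
    simp only [ContinuousMap.coe_mk, integral_complex_ofReal] at this
    simpa [Function.comp_def] using (Complex.continuous_re.tendsto _).comp this
  rw [Metric.tendsto_nhds]
  intro ε hε
  obtain ⟨t, htf, ht⟩ := exists_finite_net (ε := ε / 6) (by positivity)
  have hall : ∀ᶠ δ in l, ∀ p ∈ t, dist (∫ x, p x ∂(μ δ)) (∫ x, p x) < ε / 6 :=
    (Filter.eventually_all_finite htf).2 fun p _ =>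
      Metric.tendsto_nhds.1 (hreal p) (ε / 6) (by positivity)
  filter_upwards [hp, hall] with δ hδ hδt
  have hW : W volume (μ δ) ≤ ε / 2 := by
    refine Real.iSup_le (fun ⟨g, hg, hg1⟩ => ?_) (by positivity)
    obtain ⟨p, hpt, hgp⟩ := ht g hg hg1
    have h1 := norm_integral_sub_le_of_close volume hg.continuous p.continuous hgp
    have h2 := norm_integral_sub_le_of_close (μ δ) hg.continuous p.continuous hgp
    have h3 := hδt p hpt
    rw [← dist_eq_norm] at h1 h2
    rw [dist_comm] at h2 h3
    change |(∫ x, g x) - ∫ x, g x ∂(μ δ)| ≤ ε / 2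
    rw [← Real.dist_eq]
    linarith [dist_triangle4 (∫ x, g x) (∫ x, p x) (∫ x, p x ∂(μ δ)) (∫ x, g x ∂(μ δ))]
  have hW0 : 0 ≤ W volume (μ δ) := Real.iSup_nonneg fun _ => abs_nonneg _
  rw [Real.dist_0_eq_abs, abs_of_nonneg hW0]
  linarith

/-- **Weak statistical stability of irrational rotations.**
If `α` is irrational, `T_δ` are Borel measurable maps of the circle with
`sup_x d(R_α x, T_δ x) ≤ δ` for `δ ∈ [0, δ̄]`, and `μ_δ` are `T_δ`-invariant Borel
probability measures, then `W(m, μ_δ) → 0` as `δ → 0`. -/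
theorem weak_statistical_stability_irrational_rotation
    (α : ℝ) (hα : Irrational α) (δbar : ℝ) (hδbar : 0 < δbar)
    (T : ℝ → AddCircle (1:ℝ) → AddCircle (1:ℝ))
    (hmeas : ∀ δ ∈ Set.Icc (0:ℝ) δbar, Measurable (T δ))
    (hclose : ∀ δ ∈ Set.Icc (0:ℝ) δbar, ∀ x, dist (x + (α : AddCircle (1:ℝ))) (T δ x) ≤ δ)
    (μ : ℝ → Measure (AddCircle (1:ℝ)))
    (hprob : ∀ δ ∈ Set.Icc (0:ℝ) δbar, IsProbabilityMeasure (μ δ))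
    (hinv : ∀ δ ∈ Set.Icc (0:ℝ) δbar, Measure.map (T δ) (μ δ) = μ δ) :
    Tendsto (fun δ => W volume (μ δ)) (nhdsWithin 0 (Set.Icc 0 δbar)) (nhds 0) := by
  have hmem : ∀ᶠ δ in 𝓝[Set.Icc 0 δbar] (0:ℝ), δ ∈ Set.Icc (0:ℝ) δbar := self_mem_nhdsWithin
  have hp : ∀ᶠ δ in 𝓝[Set.Icc 0 δbar] (0:ℝ), IsProbabilityMeasure (μ δ) := hmem.mono hprob
  refine tendsto_W_of_tendsto_integral hp (tendsto_integral_of_fourier hp fun n hn => ?_)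
  have hne : fourier n (α : AddCircle (1:ℝ)) - 1 ≠ 0 :=
    sub_ne_zero.2 (fourier_irrational_ne_one hα hn)
  have key : Tendsto (fun δ => (fourier n (α : AddCircle (1:ℝ)) - 1) *
      ∫ x, fourier n x ∂(μ δ)) (𝓝[Set.Icc 0 δbar] (0:ℝ)) (𝓝 0) := by
    rw [Metric.tendsto_nhds]
    intro ε hε
    obtain ⟨η, hη, hunif⟩ := Metric.uniformContinuous_iff.1
      (CompactSpace.uniformContinuous_of_continuous (fourier (T := (1:ℝ)) n).continuous)
      (ε / 2) (by positivity)
    have hsmall : ∀ᶠ δ in 𝓝[Set.Icc 0 δbar] (0:ℝ), δ < η :=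
      nhdsWithin_le_nhds (Iio_mem_nhds hη)
    filter_upwards [hmem, hp, hsmall] with δ hδ hpδ hδη
    have hT := hmeas δ hδ
    have hc : Continuous (fourier (T := (1:ℝ)) n) := (fourier n).continuous
    have hi : Integrable (fun x => fourier n x) (μ δ) :=
      hc.integrable_of_hasCompactSupport (.of_compactSpace _)
    have hiT : Integrable (fun x => fourier n (T δ x)) (μ δ) := by
      refine Integrable.comp_measurable (g := fun x => fourier n x) ?_ hT
      rwa [hinv δ hδ]
    have hI : ∫ x, fourier n (T δ x) ∂(μ δ) = ∫ x, fourier n x ∂(μ δ) := by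
      conv_rhs => rw [← hinv δ hδ]
      exact (integral_map hT.aemeasurable hc.aestronglyMeasurable).symm
    have hmul : ∀ x : AddCircle (1:ℝ), fourier n (x + (α : AddCircle (1:ℝ))) =
        fourier n (α : AddCircle (1:ℝ)) * fourier n x := by
      intro x
      simp only [fourier_apply, smul_add, AddCircle.toCircle_add, Circle.coe_mul]
      ring
    have heq : (fourier n (α : AddCircle (1:ℝ)) - 1) * ∫ x, fourier n x ∂(μ δ) =
        ∫ x, (fourier n (x + (α : AddCircle (1:ℝ))) - fourier n (T δ x)) ∂(μ δ) := by
      simp only [hmul]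
      rw [integral_sub (hi.const_mul _) hiT, hI, integral_const_mul]
      ring
    rw [heq, dist_zero_right]
    have hle := norm_integral_le_of_norm_le_const (μ := μ δ) (C := ε / 2)
      (f := fun x => fourier n (x + (α : AddCircle (1:ℝ))) - fourier n (T δ x))
      (Eventually.of_forall fun x => by
        rw [← dist_eq_norm]
        exact (hunif ((hclose δ hδ x).trans_lt hδη)).le)
    simp only [probReal_univ, mul_one] at hle
    linarith
  have := key.const_mul (fourier n (α : AddCircle (1:ℝ)) - 1)⁻¹
  simpa only [inv_mul_cancel_left₀ hne, mul_zero] using this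
end

section
/- Let S : 𝕊¹ → 𝕊¹ be an isometry of the circle preserving the normalized Lebesgue measure m, let T : 𝕊¹ → 𝕊¹ be a Borel measurable map, and let μ be a Borel probability measure on 𝕊¹ with T_*μ = μ. Then for every integer n ≥ 1: W(μ, m) ≤ W(m, (1/n) Σ_{i=1}^{n} (S^i)_*μ) + ((n−1)/2) · W(S_*μ, T_*μ), where S^i denotes the i-fold composition of S. -/
/-!
The average in the statement runs over `S, …, Sⁿ`, for which the triangle inequality alone gives the
constant `(n+1)/2`. The constant `(n-1)/2` comes from shifting the average to `S⁰, …, Sⁿ⁻¹`: a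
measure-preserving isometry of the circle is onto, so a test function `g` can be replaced by
`g ∘ S⁻¹`, which is again a test function with the same Lebesgue integral. Testing the Cesàro
average against `g ∘ S⁻¹` produces `(1/n) ∑_{i<n} ∫ g ∘ Sⁱ dμ`, and each term differs from `∫ g dμ`
by at most `i · W(S_* μ, μ)` since every `g ∘ Sᵏ` is a test function. Finally
`(1/n) ∑_{i<n} i = (n-1)/2`, and `μ = T_* μ`.
-/

open MeasureTheory Filter Topology

/-- The Cesàro average `(1/n) Σ_{i=1}^n (S^i)_* μ` of the pushforwards of `μ`
under the iterates of `S`. -/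
noncomputable def cesaroAvg (S : AddCircle (1:ℝ) → AddCircle (1:ℝ))
    (μ : Measure (AddCircle (1:ℝ))) (n : ℕ) : Measure (AddCircle (1:ℝ)) :=
  (n : ENNReal)⁻¹ • ∑ i ∈ Finset.range n, Measure.map (S^[i + 1]) μ

lemma integrable_of_test {g : AddCircle (1:ℝ) → ℝ} (hg : LipschitzWith 1 g)
    (hb : ∀ x, |g x| ≤ 1) (μ : Measure (AddCircle (1:ℝ))) [IsFiniteMeasure μ] :
    Integrable g μ :=
  Integrable.of_bound hg.continuous.aestronglyMeasurable 1 (.of_forall hb)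

/-- The supremum defining `W` is over a bounded family when both measures are finite, so that it is
an upper bound and not the junk value `0`. -/
lemma abs_integral_sub_le_W {g : AddCircle (1:ℝ) → ℝ} (hg : LipschitzWith 1 g)
    (hb : ∀ x, |g x| ≤ 1) (μ ν : Measure (AddCircle (1:ℝ))) [IsFiniteMeasure μ]
    [IsFiniteMeasure ν] : |(∫ x, g x ∂μ) - ∫ x, g x ∂ν| ≤ W μ ν := by
  refine le_ciSup (f := fun g : {g : AddCircle (1:ℝ) → ℝ // LipschitzWith 1 g ∧ ∀ x, |g x| ≤ 1} =>
    |(∫ x, g.1 x ∂μ) - ∫ x, g.1 x ∂ν|) ⟨μ.real Set.univ + ν.real Set.univ, ?_⟩ ⟨g, hg, hb⟩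
  rintro _ ⟨f, rfl⟩
  have key : ∀ ρ : Measure (AddCircle (1:ℝ)), IsFiniteMeasure ρ →
      |∫ x, f.1 x ∂ρ| ≤ ρ.real Set.univ := fun ρ _ => by
    simpa using norm_integral_le_of_norm_le_const (μ := ρ) (f := f.1) (C := 1) (.of_forall f.2.2)
  exact (abs_sub _ _).trans (add_le_add (key μ inferInstance) (key ν inferInstance))

/-- The range is closed and conull, and Lebesgue measure charges every nonempty open set. -/
lemma surjective_of_isometry_of_map_volume {S : AddCircle (1:ℝ) → AddCircle (1:ℝ)}
    (hS : Isometry S) (hSm : Measure.map S (volume : Measure (AddCircle (1:ℝ))) = volume) :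
    Function.Surjective S := by
  have hopen : IsOpen (Set.range S)ᶜ := (isCompact_range hS.continuous).isClosed.isOpen_compl
  have hnull : (volume : Measure (AddCircle (1:ℝ))) (Set.range S)ᶜ = 0 := by
    rw [← hSm, Measure.map_apply hS.continuous.measurable hopen.measurableSet]
    simp
  rw [← Set.range_eq_univ, ← Set.compl_empty_iff]
  exact (hopen.measure_eq_zero_iff _).1 hnull

lemma lipschitzWith_comp_iterate {S : AddCircle (1:ℝ) → AddCircle (1:ℝ)} (hS : Isometry S)
    {g : AddCircle (1:ℝ) → ℝ} (hg : LipschitzWith 1 g) (k : ℕ) :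
    LipschitzWith 1 (fun x => g (S^[k] x)) := by
  simpa [Function.comp_def] using hg.comp (hS.lipschitz.iterate k)

/-- Telescoping along the orbit: consecutive averages differ by at most `W (S_* μ) μ`. -/
lemma abs_integral_iterate_sub_le {S : AddCircle (1:ℝ) → AddCircle (1:ℝ)} (hS : Isometry S)
    (μ : Measure (AddCircle (1:ℝ))) [IsFiniteMeasure μ] {g : AddCircle (1:ℝ) → ℝ}
    (hg : LipschitzWith 1 g) (hb : ∀ x, |g x| ≤ 1) (k : ℕ) :
    |(∫ x, g (S^[k] x) ∂μ) - ∫ x, g x ∂μ| ≤ k * W (Measure.map S μ) μ := by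
  induction k with
  | zero => simp
  | succ k ih =>
    have hL := lipschitzWith_comp_iterate hS hg k
    have h := abs_integral_sub_le_W hL (fun x => hb _) (Measure.map S μ) μ
    rw [integral_map hS.continuous.aemeasurable hL.continuous.aestronglyMeasurable] at h
    simp only [Function.iterate_succ_apply]
    push_cast
    linarith [abs_sub_le (∫ x, g (S^[k] (S x)) ∂μ) (∫ x, g (S^[k] x) ∂μ) (∫ x, g x ∂μ)]

lemma sum_range_natCast (n : ℕ) : ∑ i ∈ Finset.range n, (i : ℝ) = n * ((n - 1) / 2) := by
  induction n with
  | zero => simp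
  | succ k ih => rw [Finset.sum_range_succ, ih]; push_cast; ring

lemma integral_cesaroAvg {S : AddCircle (1:ℝ) → AddCircle (1:ℝ)} (hS : Isometry S)
    (μ : Measure (AddCircle (1:ℝ))) [IsFiniteMeasure μ] {h : AddCircle (1:ℝ) → ℝ}
    (hh : LipschitzWith 1 h) (hb : ∀ x, |h x| ≤ 1) (n : ℕ) :
    ∫ x, h x ∂(cesaroAvg S μ n)
      = (n : ℝ)⁻¹ * ∑ i ∈ Finset.range n, ∫ x, h (S^[i + 1] x) ∂μ := by
  rw [cesaroAvg, integral_smul_measure,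
    integral_finsetSum_measure fun i _ => integrable_of_test hh hb _]
  simp only [ENNReal.toReal_inv, ENNReal.toReal_natCast, smul_eq_mul]
  congr 1
  refine Finset.sum_congr rfl fun i _ => ?_
  exact integral_map (hS.continuous.iterate _).aemeasurable hh.continuous.aestronglyMeasurable

/-- If `S` is an isometry of the circle preserving Lebesgue measure `m`, `T` is Borel
measurable, and `μ` is a `T`-invariant Borel probability measure, then for every `n ≥ 1`
`W(μ, m) ≤ W(m, (1/n) Σ_{i=1}^n (S^i)_* μ) + ((n−1)/2) · W(S_* μ, T_* μ)`. -/
theorem wasserstein_stability_lemma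
    (S : AddCircle (1:ℝ) → AddCircle (1:ℝ)) (hS : Isometry S)
    (hSm : Measure.map S (volume : Measure (AddCircle (1:ℝ))) = volume)
    (T : AddCircle (1:ℝ) → AddCircle (1:ℝ)) (hT : Measurable T)
    (μ : Measure (AddCircle (1:ℝ))) (hμ : IsProbabilityMeasure μ)
    (hinv : Measure.map T μ = μ) (n : ℕ) (hn : 1 ≤ n) :
    W μ volume ≤ W volume (cesaroAvg S μ n)
      + ((n : ℝ) - 1) / 2 * W (Measure.map S μ) (Measure.map T μ) := by
  have : IsFiniteMeasure (cesaroAvg S μ n) :=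
    Measure.smul_finite _ (by simp; omega)
  have : Nonempty {g : AddCircle (1:ℝ) → ℝ // LipschitzWith 1 g ∧ ∀ x, |g x| ≤ 1} :=
    ⟨0, LipschitzWith.const' 0, by simp⟩
  rw [hinv]
  refine ciSup_le ?_
  rintro ⟨g, hg, hb⟩
  obtain ⟨R, hR⟩ := (surjective_of_isometry_of_map_volume hS hSm).hasRightInverse
  have hRS : ∀ x, R (S x) = x := fun x => hS.injective (hR _)
  have hh : LipschitzWith 1 (fun x => g (R x)) := by
    simpa [Function.comp_def] using hg.comp (hS.right_inv hR).lipschitz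
  have h1 := abs_integral_sub_le_W hh (fun x => hb _) volume (cesaroAvg S μ n)
  have hvol : ∫ x, g (R x) = ∫ x, g x := by
    conv_lhs => rw [← hSm]
    rw [integral_map hS.continuous.aemeasurable hh.continuous.aestronglyMeasurable]
    simp only [hRS]
  rw [hvol, integral_cesaroAvg hS μ hh (fun x => hb _)] at h1
  simp only [Function.iterate_succ_apply', hRS] at h1
  have hn0 : (0:ℝ) < n := by exact_mod_cast hn
  have hgauss := sum_range_natCast n
  have h2 : |(n : ℝ)⁻¹ * ∑ i ∈ Finset.range n, ∫ x, g (S^[i] x) ∂μ - ∫ x, g x ∂μ|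
      ≤ ((n : ℝ) - 1) / 2 * W (Measure.map S μ) μ := by
    have e : (n : ℝ)⁻¹ * ∑ i ∈ Finset.range n, ∫ x, g (S^[i] x) ∂μ - ∫ x, g x ∂μ
        = (n : ℝ)⁻¹ * ∑ i ∈ Finset.range n, ((∫ x, g (S^[i] x) ∂μ) - ∫ x, g x ∂μ) := by
      rw [Finset.sum_sub_distrib, Finset.sum_const, Finset.card_range, nsmul_eq_mul]
      field_simp
    rw [e, abs_mul, abs_of_pos (inv_pos.2 hn0), inv_mul_le_iff₀ hn0, ← mul_assoc, ← hgauss,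
      Finset.sum_mul]
    exact (Finset.abs_sum_le_sum_abs _ _).trans
      (Finset.sum_le_sum fun i _ => abs_integral_iterate_sub_le hS μ hg hb i)
  rw [abs_sub_comm] at h2
  rw [abs_le] at h1 h2 ⊢
  constructor <;> linarith [h1.1, h1.2, h2.1, h2.2]
end

section
/- Let α be an irrational number of finite Diophantine type γ(α) < ∞. Then for every ε > 0 there exists a constant C = C(ε) ≥ 0 such that for every x₀ ∈ [0,1] and every N ≥ 1, the discrepancy of the orbit of x₀ under the rotation by α satisfies D_{N,α}(x₀) ≤ C · N^{−1/γ(α) + ε}. -/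
/-!
The number of orbit points in a subinterval is controlled block by block. If `p / q` is a reduced
fraction with `q ≤ n` and `|α - p / q| ≤ 1 / ((n + 1) q)`, then `q` consecutive orbit points shadow
a translate of the `q` equally spaced points `i p / q mod 1` to within `1 / q`, so every interval
`[a, b]` contains `q (b - a)` of them up to an error of at most `6` (`abs_orbitCount_block_le`).

For `γ` larger than the Diophantine type there is `c > 0` with `‖k α‖ ≥ c k ^ (-γ)` for all
`k ≥ 1` (`exists_pos_le_of_notMem_dioSet`), and Dirichlet's theorem then forces `γ ≥ 1`
(`one_le_of_forall_le`). Given `n`, Dirichlet's theorem also provides `p / q` as above, and the lower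
bound on `‖q α‖` yields `q ≥ (c n) ^ (1 / γ)`. Writing `n = b q + r` with `r < q`, the `b` full
blocks contribute at most `6 b = O(n ^ (1 - 1 / γ))`, while the remaining `r ≤ n / 2` points are
handled by induction. Since `γ > 1`, the errors form a geometric series, so the total is
`O(n ^ (1 - 1 / γ))` (`exists_abs_orbitCount_sub_le`). Dividing by `n` and taking `γ` to be the
Diophantine type plus `ε` gives the theorem.
-/

open MeasureTheory Filter Topology

/-- `‖x‖_ℤ`: the distance from `x` to the nearest integer. -/
noncomputable def distInt (x : ℝ) : ℝ := |x - round x|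

/-- The set of exponents `γ ≥ 0` with `liminf_{k→∞} k^γ ‖kα‖_ℤ = 0`; the Diophantine
type `γ(α)` is the supremum of this set. -/
noncomputable def dioSet (α : ℝ) : Set ℝ :=
  {γ : ℝ | 0 ≤ γ ∧
    Filter.atTop.liminf
      (fun k : ℕ => ENNReal.ofReal ((k : ℝ) ^ γ * distInt (k * α))) = 0}

/-- The Diophantine type `γ(α) = sup { γ ≥ 0 : liminf_k k^γ ‖kα‖_ℤ = 0 }`. -/
noncomputable def dioType (α : ℝ) : ℝ := sSup (dioSet α)

/-- The discrepancy of the points `x 1, …, x N ∈ [0,1]`. -/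
noncomputable def discrepancy (N : ℕ) (x : ℕ → ℝ) : ℝ :=
  ⨆ p : {p : ℝ × ℝ // 0 ≤ p.1 ∧ p.1 ≤ p.2 ∧ p.2 ≤ 1},
    |(∑ i ∈ Finset.Icc 1 N, if x i ∈ Set.Icc p.1.1 p.1.2 then (1:ℝ) else 0) / N
      - (p.1.2 - p.1.1)|

/-- `D_{N,α}(x₀)`: the discrepancy of the `N` points `x_i = x₀ + iα − ⌊x₀ + iα⌋`. -/
noncomputable def discOrbit (α x₀ : ℝ) (N : ℕ) : ℝ :=
  discrepancy N (fun i => Int.fract (x₀ + i * α))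

/-! ### Counting orbit points in blocks -/

/-- The number of `i ∈ {1, …, n}` for which the fractional part of `y + i α` lies in `[a, b]`, as a
real number; the index is shifted so as to run over `Finset.range n`. -/
noncomputable def orbitCount (α y : ℝ) (n : ℕ) (a b : ℝ) : ℝ :=
  ∑ i ∈ Finset.range n, if Int.fract (y + ((i : ℝ) + 1) * α) ∈ Set.Icc a b then (1 : ℝ) else 0

lemma orbitCount_add (α y : ℝ) (m n : ℕ) (a b : ℝ) :
    orbitCount α y (m + n) a b = orbitCount α y m a b + orbitCount α (y + m * α) n a b := by
  unfold orbitCount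
  rw [Finset.sum_range_add]
  congr 1
  refine Finset.sum_congr rfl fun i _ => ?_
  have h : y + (((m + i : ℕ) : ℝ) + 1) * α = y + m * α + ((i : ℝ) + 1) * α := by
    push_cast; ring
  rw [h]

lemma orbitCount_eq_card (α y : ℝ) (n : ℕ) (a b : ℝ) :
    orbitCount α y n a b = (((Finset.range n).filter
      (fun i : ℕ => Int.fract (y + ((i : ℝ) + 1) * α) ∈ Set.Icc a b)).card : ℝ) := by
  unfold orbitCount
  rw [Finset.sum_boole]

/-- The one-sided block estimate. If the `i`-th point lies in `[a, b]` then the integer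
`(i + 1) p - q ⌊y + (i + 1) α⌋` lies within `1` of `[q (a - y), q (b - y)]`, and its residue
modulo `q` determines `i`. -/
lemma orbitCount_block_le (α : ℝ) (n : ℕ) (r : ℚ)
    (hr : |α - r| ≤ 1 / (((n : ℝ) + 1) * r.den)) (hn : r.den ≤ n)
    (y a b : ℝ) (hab : a ≤ b) :
    orbitCount α y r.den a b ≤ r.den * (b - a) + 3 := by
  rw [orbitCount_eq_card]
  have hq : (0 : ℝ) < r.den := by exact_mod_cast r.den_pos
  have hn' : (r.den : ℝ) ≤ n := by exact_mod_cast hn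
  have hrq : (r : ℝ) * r.den = r.num := by exact_mod_cast Rat.mul_den_eq_num r
  set q : ℝ := (r.den : ℝ) with hqdef
  set L : ℝ := q * a - q * y - 1
  set U : ℝ := q * b - q * y + 1
  have hLU : L + 2 ≤ U := by simp only [L, U]; nlinarith
  have hdel : q * |α - r| ≤ 1 / (n + 1) := by
    calc q * |α - r| ≤ q * (1 / (((n : ℝ) + 1) * q)) := by gcongr
      _ = 1 / (n + 1) := by field_simp
  have hcard : ((Finset.range r.den).filter
      (fun i : ℕ => Int.fract (y + ((i : ℝ) + 1) * α) ∈ Set.Icc a b)).card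
      ≤ (Finset.Icc ⌈L⌉ ⌊U⌋).card := by
    refine Finset.card_le_card_of_injOn
      (fun i : ℕ => ((i : ℤ) + 1) * r.num - r.den * ⌊y + ((i : ℝ) + 1) * α⌋) ?_ ?_
    · intro i hi
      simp only [Finset.coe_filter, Finset.mem_range, Set.mem_ofPred_eq, Set.mem_Icc] at hi
      obtain ⟨hi, h1, h2⟩ := hi
      have hi' : (i : ℝ) + 1 ≤ q := by rw [hqdef]; exact_mod_cast hi
      have hi0 : (0 : ℝ) ≤ (i : ℝ) + 1 := by positivity
      have herr : |((i : ℝ) + 1) * (q * (α - r))| ≤ 1 := by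
        rw [abs_mul, abs_mul, abs_of_nonneg hi0, abs_of_pos hq]
        calc ((i : ℝ) + 1) * (q * |α - r|) ≤ q * (1 / (n + 1)) := by gcongr
          _ ≤ 1 := by
            rw [mul_one_div, div_le_one (by positivity)]; linarith
      rw [abs_le] at herr
      have hf : Int.fract (y + ((i : ℝ) + 1) * α)
        = y + ((i : ℝ) + 1) * α - ⌊y + ((i : ℝ) + 1) * α⌋ := rfl
      rw [hf] at h1 h2
      have h1' := mul_le_mul_of_nonneg_left h1 hq.le
      have h2' := mul_le_mul_of_nonneg_left h2 hq.le
      have e : ((i : ℝ) + 1) * r.num = ((i : ℝ) + 1) * (r * q) := by rw [hrq]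
      simp only [Finset.coe_Icc, Set.mem_Icc, Int.ceil_le, Int.le_floor]
      push_cast
      rw [e]
      constructor <;> simp only [L, U] <;> nlinarith
    · intro i hi j hj hij
      simp only [Finset.coe_filter, Finset.mem_range, Set.mem_ofPred_eq] at hi hj hij
      have hcop : IsCoprime (r.den : ℤ) r.num := by
        rw [Int.isCoprime_iff_gcd_eq_one]
        simpa [Int.gcd, Nat.Coprime, Nat.gcd_comm] using r.reduced
      have hd : (r.den : ℤ) ∣ ((i : ℤ) - j) * r.num :=
        ⟨⌊y + ((i : ℝ) + 1) * α⌋ - ⌊y + ((j : ℝ) + 1) * α⌋, by linear_combination hij⟩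
      have hd' := hcop.dvd_of_dvd_mul_right hd
      have h0 : (i : ℤ) - j = 0 := by
        refine Int.eq_zero_of_abs_lt_dvd hd' ?_
        rw [abs_lt]; omega
      omega
  have hle : ((Finset.Icc ⌈L⌉ ⌊U⌋).card : ℝ) ≤ U - L + 1 := by
    rw [Int.card_Icc]
    have h1 := Int.floor_le U
    have h2 := Int.le_ceil L
    have h3 : (((⌊U⌋ + 1 - ⌈L⌉).toNat : ℤ) : ℝ) ≤ U - L + 1 := by
      rcases le_total 0 (⌊U⌋ + 1 - ⌈L⌉) with h | h
      · rw [Int.toNat_of_nonneg h]; push_cast; linarith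
      · rw [Int.toNat_of_nonpos h]; push_cast; linarith
    exact_mod_cast h3
  calc _ ≤ ((Finset.Icc ⌈L⌉ ⌊U⌋).card : ℝ) := by exact_mod_cast hcard
    _ ≤ U - L + 1 := hle
    _ = q * (b - a) + 3 := by simp only [L, U]; ring

/-- The lower bound comes from applying the upper bound to `[0, a]` and `[b, 1]`, which together
with `[a, b]` cover all the points. -/
lemma abs_orbitCount_block_le (α : ℝ) (n : ℕ) (r : ℚ)
    (hr : |α - r| ≤ 1 / (((n : ℝ) + 1) * r.den)) (hn : r.den ≤ n)
    (y a b : ℝ) (ha : 0 ≤ a) (hab : a ≤ b) (hb : b ≤ 1) :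
    |orbitCount α y r.den a b - r.den * (b - a)| ≤ 6 := by
  have h1 := orbitCount_block_le α n r hr hn y a b hab
  have h2 := orbitCount_block_le α n r hr hn y 0 a ha
  have h3 := orbitCount_block_le α n r hr hn y b 1 hb
  have h4 : (r.den : ℝ) ≤ orbitCount α y r.den 0 a + orbitCount α y r.den a b
      + orbitCount α y r.den b 1 := by
    unfold orbitCount
    rw [← Finset.sum_add_distrib, ← Finset.sum_add_distrib]
    calc (r.den : ℝ) = ∑ i ∈ Finset.range r.den, (1 : ℝ) := by simp
      _ ≤ _ := by
        refine Finset.sum_le_sum fun i _ => ?_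
        have hf0 := Int.fract_nonneg (y + ((i : ℝ) + 1) * α)
        have hf1 := (Int.fract_lt_one (y + ((i : ℝ) + 1) * α)).le
        simp only [Set.mem_Icc]
        rcases le_total (Int.fract (y + ((i : ℝ) + 1) * α)) a with h | h
        · rw [if_pos ⟨hf0, h⟩]; split_ifs <;> norm_num
        · rcases le_total (Int.fract (y + ((i : ℝ) + 1) * α)) b with h' | h'
          · rw [if_pos (c := a ≤ _ ∧ _) ⟨h, h'⟩]; split_ifs <;> norm_num
          · rw [if_pos (c := b ≤ _ ∧ _) ⟨h', hf1⟩]; split_ifs <;> norm_num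
  rw [abs_le]
  constructor <;> linarith

lemma abs_orbitCount_blocks_le (α : ℝ) (n : ℕ) (r : ℚ)
    (hr : |α - r| ≤ 1 / (((n : ℝ) + 1) * r.den)) (hn : r.den ≤ n)
    (a b : ℝ) (ha : 0 ≤ a) (hab : a ≤ b) (hb : b ≤ 1) (k : ℕ) (y : ℝ) :
    |orbitCount α y (r.den * k) a b - (r.den * k : ℕ) * (b - a)| ≤ 6 * k := by
  induction k with
  | zero => simp [orbitCount]
  | succ k ih =>
    rw [Nat.mul_succ, orbitCount_add]
    have h := abs_orbitCount_block_le α n r hr hn (y + (r.den * k : ℕ) * α) a b ha hab hb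
    rw [abs_le] at h ih ⊢
    push_cast at *
    constructor <;> linarith

/-! ### Lower bounds from the Diophantine type -/

lemma distInt_pos {α : ℝ} (hα : Irrational α) {k : ℕ} (hk : 1 ≤ k) : 0 < distInt (k * α) := by
  unfold distInt
  rw [abs_pos, sub_ne_zero]
  exact (hα.natCast_mul (by omega)).ne_int _

/-- The liminf only controls large `k`; irrationality extends the bound to all `k ≥ 1`. -/
lemma exists_pos_le_of_notMem_dioSet {α : ℝ} (hα : Irrational α) {γ : ℝ} (hγ : 0 ≤ γ)
    (h : γ ∉ dioSet α) :
    ∃ c > (0 : ℝ), ∀ k : ℕ, 1 ≤ k → c ≤ (k : ℝ) ^ γ * distInt (k * α) := by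
  have h0 : (0 : ENNReal) < Filter.atTop.liminf
      (fun k : ℕ => ENNReal.ofReal ((k : ℝ) ^ γ * distInt (k * α))) := by
    rw [pos_iff_ne_zero]
    exact fun h' => h ⟨hγ, h'⟩
  obtain ⟨d, hd0, hd⟩ := ENNReal.lt_iff_exists_nnreal_btwn.1 h0
  obtain ⟨K, hK⟩ := eventually_atTop.1 (eventually_lt_of_lt_liminf hd)
  have hfin : ∀ M : ℕ, ∃ c > (0 : ℝ), ∀ k : ℕ, 1 ≤ k → k < M →
      c ≤ (k : ℝ) ^ γ * distInt (k * α) := by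
    intro M
    induction M with
    | zero => exact ⟨1, one_pos, fun k _ hk => absurd hk (by omega)⟩
    | succ M ih =>
      obtain ⟨c, hc, hcM⟩ := ih
      rcases Nat.eq_zero_or_pos M with rfl | hM
      · exact ⟨1, one_pos, fun k _ hk => absurd hk (by omega)⟩
      · have hM' : (0 : ℝ) < (M : ℝ) ^ γ * distInt (M * α) :=
          mul_pos (Real.rpow_pos_of_pos (by exact_mod_cast hM) _) (distInt_pos hα hM)
        refine ⟨min c ((M : ℝ) ^ γ * distInt (M * α)), lt_min hc hM', fun k hk hkM => ?_⟩
        rcases Nat.lt_succ_iff_lt_or_eq.1 hkM with h' | rfl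
        · exact (min_le_left _ _).trans (hcM k hk h')
        · exact min_le_right _ _
  obtain ⟨c, hc, hcK⟩ := hfin K
  have hd0' : (0 : ℝ) < d := by exact_mod_cast hd0
  refine ⟨min c d, lt_min hc hd0', fun k hk => ?_⟩
  rcases lt_or_ge k K with hkK | hkK
  · exact (min_le_left _ _).trans (hcK k hk hkK)
  · refine (min_le_right _ _).trans ?_
    have := hK k hkK
    rw [← ENNReal.ofReal_coe_nnreal] at this
    exact ((ENNReal.ofReal_lt_ofReal_iff_of_nonneg hd0'.le).1 this).le

/-- Dirichlet's theorem with denominators up to `n` would give `c ≤ n ^ γ / (n + 1)`, which fails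
for large `n` when `γ < 1`. -/
lemma one_le_of_forall_le {α γ c : ℝ} (hγ : 0 ≤ γ) (hc : 0 < c)
    (h : ∀ k : ℕ, 1 ≤ k → c ≤ (k : ℝ) ^ γ * distInt (k * α)) : 1 ≤ γ := by
  by_contra! hlt
  have ht : Tendsto (fun n : ℕ => (n : ℝ) ^ (-(1 - γ))) atTop (𝓝 0) :=
    (tendsto_rpow_neg_atTop (by linarith)).comp tendsto_natCast_atTop_atTop
  obtain ⟨n, hn, hn1⟩ := ((ht.eventually (gt_mem_nhds hc)).and (eventually_ge_atTop 1)).exists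
  obtain ⟨k, hk0, hkn, hk⟩ := Real.exists_nat_abs_mul_sub_round_le α (n := n) hn1
  have hn0 : (0 : ℝ) < n := by exact_mod_cast hn1
  have h1 : (n : ℝ) ^ (-(1 - γ)) = (n : ℝ) ^ γ * (1 / n) := by
    rw [show -(1 - γ) = γ - 1 by ring, Real.rpow_sub_one hn0.ne', mul_one_div]
  have h2 : (k : ℝ) ^ γ * distInt (k * α) ≤ (n : ℝ) ^ γ * (1 / n) := by
    have hkn' : (k : ℝ) ≤ n := by exact_mod_cast hkn
    have : distInt (k * α) ≤ 1 / n :=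
      hk.trans (one_div_le_one_div_of_le hn0 (by linarith))
    have h0 : 0 ≤ distInt (k * α) := abs_nonneg _
    gcongr
  have := h k hk0
  linarith

/-! ### The recursive count estimate and the discrepancy bound -/

lemma exists_abs_orbitCount_sub_le {α γ c : ℝ} (hγ : 1 < γ) (hc : 0 < c)
    (h : ∀ k : ℕ, 1 ≤ k → c ≤ (k : ℝ) ^ γ * distInt (k * α)) :
    ∃ K ≥ (0 : ℝ), ∀ n : ℕ, ∀ y a b : ℝ, 0 ≤ a → a ≤ b → b ≤ 1 →
      |orbitCount α y n a b - n * (b - a)| ≤ K * (n : ℝ) ^ (1 - 1 / γ) := by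
  have hγ0 : 0 < γ := by linarith
  have hs : 0 < 1 - 1 / γ := by
    have : 1 / γ < 1 := by rwa [div_lt_one hγ0]
    linarith
  set s := 1 - 1 / γ with hsdef
  have hθ : (1 / 2 : ℝ) ^ s < 1 := Real.rpow_lt_one (by norm_num) (by norm_num) hs
  set θ := (1 / 2 : ℝ) ^ s
  set A := 6 / c ^ (1 / γ) with hA
  have hcγ : 0 < c ^ (1 / γ) := Real.rpow_pos_of_pos hc _
  have hA0 : 0 < A := by positivity
  -- `K` is the sum of the geometric series `A (1 + θ + θ² + ⋯)`.
  refine ⟨A / (1 - θ), by have : 0 < 1 - θ := by linarith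
                          positivity, ?_⟩
  set K := A / (1 - θ) with hK
  have hKeq : A + K * θ = K := by
    have : 1 - θ ≠ 0 := by linarith
    rw [hK]; field_simp; ring
  have hK0 : 0 ≤ K := by have : 0 < 1 - θ := by linarith
                         positivity
  intro n
  induction n using Nat.strong_induction_on with
  | _ n ih =>
  intro y a b ha hab hb
  rcases Nat.eq_zero_or_pos n with rfl | hn
  · simp [orbitCount, Real.zero_rpow hs.ne']
  have hn0 : (0 : ℝ) < n := by exact_mod_cast hn
  obtain ⟨r, hr, hrn⟩ := Real.exists_rat_abs_sub_le_and_den_le α hn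
  have hq : (0 : ℝ) < r.den := by exact_mod_cast r.den_pos
  have hdist : distInt (r.den * α) ≤ 1 / n := by
    have hrq : (r : ℝ) * r.den = r.num := by exact_mod_cast Rat.mul_den_eq_num r
    calc distInt (r.den * α) ≤ |r.den * α - r.num| := round_le _ _
      _ = r.den * |α - r| := by
        rw [← hrq, ← abs_of_pos hq, ← abs_mul, abs_of_pos hq]; congr 1; ring
      _ ≤ r.den * (1 / ((n + 1) * r.den)) := by gcongr
      _ = 1 / (n + 1) := by field_simp
      _ ≤ 1 / n := one_div_le_one_div_of_le hn0 (by linarith)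
  have hqlow : (c * n) ^ (1 / γ) ≤ r.den := by
    have h1 : c ≤ (r.den : ℝ) ^ γ * (1 / n) :=
      (h r.den r.den_pos).trans (by gcongr)
    rw [mul_one_div, le_div_iff₀ hn0] at h1
    calc (c * n) ^ (1 / γ) ≤ ((r.den : ℝ) ^ γ) ^ (1 / γ) := by gcongr
      _ = r.den := by
        rw [← Real.rpow_mul hq.le, mul_one_div_cancel hγ0.ne', Real.rpow_one]
  have hblocks : 6 * ((n / r.den : ℕ) : ℝ) ≤ A * (n : ℝ) ^ s := by
    have h1 : ((n / r.den : ℕ) : ℝ) ≤ n / r.den := Nat.cast_div_le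
    have h2 : (n : ℝ) / r.den ≤ n / (c * n) ^ (1 / γ) := by
      gcongr
    have h3 : (n : ℝ) ^ s = n / (n : ℝ) ^ (1 / γ) := by
      rw [hsdef, Real.rpow_sub hn0, Real.rpow_one]
    rw [Real.mul_rpow hc.le hn0.le] at h2
    calc 6 * ((n / r.den : ℕ) : ℝ) ≤ 6 * (n / (c ^ (1 / γ) * (n : ℝ) ^ (1 / γ))) := by
          linarith
      _ = A * (n : ℝ) ^ s := by
        rw [h3, hA]
        have := Real.rpow_pos_of_pos hn0 (1 / γ)
        field_simp
  have hmod : n % r.den < r.den := Nat.mod_lt _ r.den_pos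
  have hdm := Nat.div_add_mod n r.den
  have hhalf : 2 * (n % r.den) ≤ n := by
    have h1 : 1 ≤ n / r.den := Nat.div_pos hrn r.den_pos
    have h2 : r.den ≤ r.den * (n / r.den) := Nat.le_mul_of_pos_right _ h1
    omega
  have hrest : ((n % r.den : ℕ) : ℝ) ^ s ≤ θ * (n : ℝ) ^ s := by
    rw [← Real.mul_rpow (by norm_num) hn0.le]
    have : (2 : ℝ) * ((n % r.den : ℕ) : ℝ) ≤ n := by exact_mod_cast hhalf
    exact Real.rpow_le_rpow (by positivity) (by linarith) hs.le
  have hb1 := abs_orbitCount_blocks_le α n r hr hrn a b ha hab hb (n / r.den) y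
  have hb2 := ih (n % r.den) (lt_of_lt_of_le hmod hrn)
    (y + (r.den * (n / r.den) : ℕ) * α) a b ha hab hb
  have hsplit : orbitCount α y n a b - n * (b - a)
      = (orbitCount α y (r.den * (n / r.den)) a b - (r.den * (n / r.den) : ℕ) * (b - a))
        + (orbitCount α (y + (r.den * (n / r.den) : ℕ) * α) (n % r.den) a b
          - (n % r.den : ℕ) * (b - a)) := by
    have h1 := orbitCount_add α y (r.den * (n / r.den)) (n % r.den) a b
    rw [hdm] at h1
    have h2 : (n : ℝ) = (r.den * (n / r.den) : ℕ) + (n % r.den : ℕ) := by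
      exact_mod_cast hdm.symm
    rw [h1]
    linear_combination (-(b - a)) * h2
  rw [hsplit]
  calc _ ≤ 6 * ((n / r.den : ℕ) : ℝ) + K * ((n % r.den : ℕ) : ℝ) ^ s :=
        (abs_add_le _ _).trans (add_le_add hb1 hb2)
    _ ≤ A * (n : ℝ) ^ s + K * (θ * (n : ℝ) ^ s) := by gcongr
    _ = (A + K * θ) * (n : ℝ) ^ s := by ring
    _ = K * (n : ℝ) ^ s := by rw [hKeq]

/-- If `α` is irrational of finite Diophantine type `γ(α)`, then for every `ε > 0`
there is `C = C(ε) ≥ 0` such that for every `x₀ ∈ [0,1]` and `N ≥ 1`,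
`D_{N,α}(x₀) ≤ C · N^{−1/γ(α) + ε}`. -/
theorem discrepancy_bound_of_finite_type
    (α : ℝ) (hα : Irrational α) (hfin : BddAbove (dioSet α)) :
    ∀ ε > (0:ℝ), ∃ C ≥ (0:ℝ), ∀ x₀ ∈ Set.Icc (0:ℝ) 1, ∀ N : ℕ, 1 ≤ N →
      discOrbit α x₀ N ≤ C * (N : ℝ) ^ (-(1 / dioType α) + ε) := by
  intro ε hε
  have hg0 : 0 ≤ dioType α := Real.sSup_nonneg fun x hx => hx.1
  have hnot : ∀ γ, dioType α < γ → γ ∉ dioSet α := fun γ hγ hmem =>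
    absurd (le_csSup hfin hmem) (not_le.2 hγ)
  have hg1 : 1 ≤ dioType α := by
    refine le_of_forall_gt_imp_ge_of_dense fun γ hγ => ?_
    have hγ0 : 0 ≤ γ := hg0.trans hγ.le
    obtain ⟨c, hc, h⟩ := exists_pos_le_of_notMem_dioSet hα hγ0 (hnot γ hγ)
    exact one_le_of_forall_le hγ0 hc h
  set g := dioType α
  obtain ⟨c, hc, h⟩ := exists_pos_le_of_notMem_dioSet hα (by linarith : 0 ≤ g + ε)
    (hnot (g + ε) (by linarith))
  obtain ⟨K, hK0, hK⟩ := exists_abs_orbitCount_sub_le (by linarith : 1 < g + ε) hc h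
  refine ⟨K, hK0, fun x₀ _ N hN => ?_⟩
  have hN0 : (0 : ℝ) < N := by exact_mod_cast hN
  have hN1 : (1 : ℝ) ≤ N := by exact_mod_cast hN
  -- `1 / g - 1 / (g + ε) = ε / (g (g + ε)) ≤ ε` because `g ≥ 1`.
  have hexp : -(1 / (g + ε)) ≤ -(1 / g) + ε := by
    have hgp : 0 < g := by linarith
    have hgε : 0 < g + ε := by linarith
    have h1 : 1 / g - 1 / (g + ε) = ε / (g * (g + ε)) := by field_simp; ring
    have h2 : ε / (g * (g + ε)) ≤ ε := div_le_self hε.le (by nlinarith)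
    linarith
  refine Real.iSup_le ?_ (by positivity)
  rintro ⟨⟨a, b⟩, ha, hab, hb⟩
  have hsum : (∑ i ∈ Finset.Icc 1 N, if Int.fract (x₀ + (i : ℝ) * α) ∈ Set.Icc a b
      then (1 : ℝ) else 0) = orbitCount α x₀ N a b := by
    unfold orbitCount
    rw [Finset.range_eq_Ico, ← Finset.Ico_add_one_right_eq_Icc,
      ← Finset.sum_Ico_add' _ 0 N 1]
    simp
  change |(∑ i ∈ Finset.Icc 1 N, if Int.fract (x₀ + (i : ℝ) * α) ∈ Set.Icc a b
      then (1 : ℝ) else 0) / N - (b - a)| ≤ _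
  rw [hsum]
  calc |orbitCount α x₀ N a b / N - (b - a)|
      = |orbitCount α x₀ N a b - N * (b - a)| / N := by
        rw [← abs_of_pos hN0, ← abs_div, abs_of_pos hN0]
        congr 1
        field_simp
    _ ≤ K * (N : ℝ) ^ (1 - 1 / (g + ε)) / N := by
        gcongr
        exact hK N x₀ a b ha hab hb
    _ = K * (N : ℝ) ^ (-(1 / (g + ε))) := by
        rw [mul_div_assoc, ← Real.rpow_sub_one hN0.ne']
        congr 2
        ring
    _ ≤ K * (N : ℝ) ^ (-(1 / g) + ε) := by
        gcongr
end

section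
/- Let α be an irrational number with Diophantine type γ(α) satisfying 1 < γ(α) ≤ +∞, and let R_α : 𝕊¹ → 𝕊¹ be the rotation by α. For every integer r ≥ 0 and every γ′ with 1 ≤ γ′ < γ(α), there exist a sequence of numbers δ_j > 0 with δ_j → 0 and C^∞ diffeomorphisms T_j : 𝕊¹ → 𝕊¹ of the form T_j(x) = x + α + g_j(x) with g_j : 𝕊¹ → ℝ smooth and max_{0 ≤ k ≤ r} ‖g_j^{(k)}‖_∞ ≤ 2δ_j (i.e., ‖T_j − R_α‖_{C^r} ≤ 2δ_j), such that every T_j-invariant Borel probability measure μ_j satisfies W(m, μ_j) ≥ (1/2) · δ_j^{1/(γ′+1)} for every j. -/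
/-!
The idea is to replace `α` by a very good rational approximation `p / k` and to make the resulting
periodic rotation semistable. For `g(x) = (p / k - α) + s (1 - cos (2πkx))` with tiny `s > 0` the map
is `T(x) = x + p / k + s (1 - cos (2πkx))`. In the coordinate `y = kx` it becomes
`y ↦ y + s k (1 - cos (2πy))`, whose only fixed point on the circle is `0` and which pushes every
other point of `(0, 1)` strictly to the right without leaving that interval (`fract_perturb`).
The representative of `kx` in `[0, 1)` is thus a bounded function that strictly increases along `T`
off the `k`-torsion points; since an invariant measure preserves its integral, every invariant
measure is carried by the `k`-torsion points (`ae_nsmul_eq_zero`). The function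
`x ↦ ‖k x‖ / k`, the distance to these points, is `1`-Lipschitz, vanishes there, and has Lebesgue
integral `1 / (4k)`, so the distance to Lebesgue measure is at least `1 / (4k)` (`W_lower`).

Put `δ = (2k)^{-(γ' + 1)}`, so that `δ^{1 / (γ' + 1)} / 2 = 1 / (4k)`. As `γ' < γ` for some `γ` with
`liminf k^γ ‖kα‖ = 0`, there are arbitrarily large `k` with `|α - p / k| = ‖kα‖ / k ≤ δ`. The
amplitude `s` is free, and is chosen so small that the oscillating term has `C^r` size at most `δ`.
-/

open MeasureTheory Filter Topology

/-! ### The semistable lift on a fundamental domain -/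

lemma strictMono_perturb {C s b : ℝ} (hs : 0 < s) (hb : 0 < b) (h : s * b < 1) :
    StrictMono (fun x : ℝ => x + C + s * (1 - Real.cos (b * x))) := by
  apply strictMono_of_deriv_pos
  intro x
  have hd : HasDerivAt (fun x : ℝ => x + C + s * (1 - Real.cos (b * x)))
      (1 + s * (Real.sin (b * x) * b)) x := by
    have h1 : HasDerivAt (fun x : ℝ => Real.cos (b * x)) (-Real.sin (b * x) * b) x := by
      have := (Real.hasDerivAt_cos (b * x)).comp x ((hasDerivAt_id x).const_mul b)
      simpa [Function.comp_def] using! this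
    have h2 := ((hasDerivAt_id x).add_const C).add ((h1.const_sub 1).const_mul s)
    simpa using! h2
  rw [hd.deriv]
  have := mul_le_mul_of_nonneg_left (Real.neg_one_le_sin (b * x)) (mul_pos hs hb).le
  nlinarith

/-- The semistable circle map `y ↦ y + c (1 - cos 2πy)` has no wrap-around in the fundamental
domain `[0, 1)`: its action there is the lift itself. -/
lemma fract_perturb {c : ℝ} (hc : 0 < c) (h : c * (2 * Real.pi) < 1) (p : ℤ) (y : ℝ) :
    Int.fract (y + p + c * (1 - Real.cos (2 * Real.pi * y))) =
      Int.fract y + c * (1 - Real.cos (2 * Real.pi * Int.fract y)) := by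
  have hcos : Real.cos (2 * Real.pi * y) = Real.cos (2 * Real.pi * Int.fract y) := by
    have : 2 * Real.pi * Int.fract y = 2 * Real.pi * y - ⌊y⌋ * (2 * Real.pi) := by
      rw [Int.fract]; ring
    rw [this, Real.cos_sub_int_mul_two_pi]
  have h1 : Int.fract y < 1 := Int.fract_lt_one y
  have h2 := strictMono_perturb (C := 0) hc (b := 2 * Real.pi) (by positivity) h h1
  simp only [mul_one, Real.cos_two_pi, sub_self, mul_zero, add_zero] at h2
  rw [hcos, Int.fract_eq_iff]
  refine ⟨?_, h2, ⌊y⌋ + p, ?_⟩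
  · have := Real.cos_le_one (2 * Real.pi * Int.fract y)
    have := Int.fract_nonneg y
    nlinarith
  · have := Int.floor_add_fract y
    push_cast
    linarith

lemma one_sub_cos_pos_of_mem {t : ℝ} (h0 : 0 < t) (h1 : t < 1) :
    0 < 1 - Real.cos (2 * Real.pi * t) := by
  have hne : Real.cos (2 * Real.pi * t) ≠ 1 := by
    intro h
    rw [Real.cos_eq_one_iff] at h
    obtain ⟨n, hn⟩ := h
    have hpi := Real.pi_pos
    have h3 : (n : ℝ) = t := by
      have : (2 * Real.pi) * (n - t) = 0 := by linarith
      rcases mul_eq_zero.1 this with h | h <;> linarith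
    rw [← h3] at h0 h1
    have a : 0 < n := by exact_mod_cast h0
    have b : n < 1 := by exact_mod_cast h1
    omega
  have := lt_of_le_of_ne (Real.cos_le_one (2 * Real.pi * t)) hne
  linarith

/-! ### Support of the invariant measures -/

/-- The coordinate in `[0, 1)` of the point `k x` of the circle. It never decreases along orbits
of the perturbed maps. -/
noncomputable def cellCoord (k : ℕ) (x : AddCircle (1 : ℝ)) : ℝ :=
  (AddCircle.equivIco (1 : ℝ) 0 (k • x) : ℝ)

lemma cellCoord_coe (k : ℕ) (x : ℝ) :
    cellCoord k (x : AddCircle (1 : ℝ)) = Int.fract (k * x) := by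
  have h : k • (x : AddCircle (1 : ℝ)) = ((k * x : ℝ) : AddCircle (1 : ℝ)) := by
    rw [← nsmul_eq_mul, AddCircle.coe_nsmul]
  rw [cellCoord, h]
  simpa using AddCircle.coe_equivIco_mk_apply (p := (1 : ℝ)) (k * x)

lemma measurable_cellCoord (k : ℕ) : Measurable (cellCoord k) :=
  measurable_subtype_coe.comp ((AddCircle.measurableEquivIco (1 : ℝ) 0).measurable.comp
    (continuous_const_smul k).measurable)

lemma cellCoord_mem (k : ℕ) (x : AddCircle (1 : ℝ)) :
    0 ≤ cellCoord k x ∧ cellCoord k x < 1 := by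
  have := (AddCircle.equivIco (1 : ℝ) 0 (k • x)).2
  simpa [cellCoord] using this

lemma nsmul_eq_zero_of_cellCoord {k : ℕ} {x : AddCircle (1 : ℝ)} (h : cellCoord k x = 0) :
    k • x = 0 := by
  have := (AddCircle.equivIco (1 : ℝ) 0).symm_apply_apply (k • x)
  rw [← this]
  have h2 : (AddCircle.equivIco (1 : ℝ) 0).symm (AddCircle.equivIco (1 : ℝ) 0 (k • x)) =
    ((AddCircle.equivIco (1 : ℝ) 0 (k • x) : ℝ) : AddCircle (1 : ℝ)) := rfl
  rw [h2]
  change ((cellCoord k x : ℝ) : AddCircle (1 : ℝ)) = 0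
  rw [h]
  simp

/-- Every invariant measure of the perturbed map lives on the `k`-torsion points: `cellCoord` is a
bounded function that strictly increases off these points, while its integral is preserved. -/
lemma ae_nsmul_eq_zero {k : ℕ} {c : ℝ} (hc : 0 < c) {T : AddCircle (1 : ℝ) → AddCircle (1 : ℝ)}
    (hT : ∀ x, cellCoord k (T x) =
      cellCoord k x + c * (1 - Real.cos (2 * Real.pi * cellCoord k x)))
    (μ : Measure (AddCircle (1 : ℝ))) [IsProbabilityMeasure μ] (hμ : Measure.map T μ = μ) :
    ∀ᵐ x ∂μ, k • x = 0 := by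
  -- a map that is not a.e.-measurable pushes `μ` to `0`, so invariance gives measurability
  have hTm : AEMeasurable T μ :=
    AEMeasurable.of_map_ne_zero (by rw [hμ]; exact IsProbabilityMeasure.ne_zero μ)
  have hint : Integrable (cellCoord k) μ := by
    refine Integrable.of_bound (measurable_cellCoord k).aestronglyMeasurable 1 (.of_forall ?_)
    intro x
    have := cellCoord_mem k x
    rw [Real.norm_eq_abs, abs_of_nonneg this.1]
    exact this.2.le
  have hintT : Integrable (fun x => cellCoord k (T x)) μ := by
    have h := hint
    rw [← hμ] at h
    exact h.comp_aemeasurable hTm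
  have heq : ∫ x, cellCoord k (T x) ∂μ = ∫ x, cellCoord k x ∂μ := by
    conv_rhs => rw [← hμ]
    exact (integral_map hTm (measurable_cellCoord k).aestronglyMeasurable).symm
  have h0 : ∫ x, (cellCoord k (T x) - cellCoord k x) ∂μ = 0 := by
    rw [integral_sub hintT hint, heq, sub_self]
  rw [integral_eq_zero_iff_of_nonneg (f := fun x => cellCoord k (T x) - cellCoord k x) ?_
    (hintT.sub hint)] at h0
  · filter_upwards [h0] with x hx
    have hx' : cellCoord k (T x) - cellCoord k x = 0 := hx
    apply nsmul_eq_zero_of_cellCoord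
    by_contra hne
    have hm := cellCoord_mem k x
    have := mul_pos hc (one_sub_cos_pos_of_mem (lt_of_le_of_ne hm.1 (Ne.symm hne)) hm.2)
    rw [hT x] at hx'
    linarith
  · intro x
    have := Real.cos_le_one (2 * Real.pi * cellCoord k x)
    have h3 : 0 ≤ c * (1 - Real.cos (2 * Real.pi * cellCoord k x)) :=
      mul_nonneg hc.le (by linarith)
    change 0 ≤ cellCoord k (T x) - cellCoord k x
    rw [hT x]
    linarith

/-! ### Distance from Lebesgue measure -/

lemma integral_norm_circle : ∫ x : AddCircle (1 : ℝ), ‖x‖ = 1 / 4 := by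
  rw [← AddCircle.intervalIntegral_preimage (1 : ℝ) (-(1 / 2))]
  have h : ∀ x ∈ Set.uIcc (-(1 / 2) : ℝ) (-(1 / 2) + 1), ‖(x : AddCircle (1 : ℝ))‖ = |x| := by
    intro x hx
    rw [Set.uIcc_of_le (by norm_num)] at hx
    rw [AddCircle.norm_coe_eq_abs_iff 1 one_ne_zero, abs_one, abs_le]
    constructor <;> linarith [hx.1, hx.2]
  rw [intervalIntegral.integral_congr h]
  have hi : ∀ a b : ℝ, IntervalIntegrable (fun x : ℝ => |x|) volume a b :=
    fun a b => continuous_abs.intervalIntegrable a b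
  rw [← intervalIntegral.integral_add_adjacent_intervals (hi _ 0) (hi 0 _)]
  have h1 : ∫ x in (-(1 / 2) : ℝ)..0, |x| = ∫ x in (-(1 / 2) : ℝ)..0, -x := by
    apply intervalIntegral.integral_congr
    intro x hx
    rw [Set.uIcc_of_le (by norm_num)] at hx
    exact abs_of_nonpos hx.2
  have h2 : ∫ x in (0 : ℝ)..(-(1 / 2) + 1), |x| = ∫ x in (0 : ℝ)..(-(1 / 2) + 1), x := by
    apply intervalIntegral.integral_congr
    intro x hx
    rw [Set.uIcc_of_le (by norm_num)] at hx
    exact abs_of_nonneg hx.1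
  rw [h1, h2, intervalIntegral.integral_neg, integral_id, integral_id]
  norm_num

/-- Each admissible test function bounds `W` from below. -/
lemma le_W (μ ν : Measure (AddCircle (1 : ℝ))) [IsProbabilityMeasure μ] [IsProbabilityMeasure ν]
    (g : AddCircle (1 : ℝ) → ℝ) (hg : LipschitzWith 1 g) (hg1 : ∀ x, |g x| ≤ 1) :
    |(∫ x, g x ∂μ) - ∫ x, g x ∂ν| ≤ W μ ν := by
  have hb : ∀ (ρ : Measure (AddCircle (1 : ℝ))) [IsProbabilityMeasure ρ]
      (f : AddCircle (1 : ℝ) → ℝ), (∀ x, |f x| ≤ 1) → |∫ x, f x ∂ρ| ≤ 1 := by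
    intro ρ _ f hf
    simpa using norm_integral_le_of_norm_le_const (μ := ρ) (f := f) (C := 1) (.of_forall hf)
  unfold W
  -- the supremum is a genuine one, since the set of values is bounded by `2`
  refine le_ciSup (f := fun g : {g : AddCircle (1:ℝ) → ℝ // LipschitzWith 1 g ∧ ∀ x, |g x| ≤ 1} =>
    |(∫ x, g.1 x ∂μ) - ∫ x, g.1 x ∂ν|) ⟨2, ?_⟩ ⟨g, hg, hg1⟩
  rintro _ ⟨f, rfl⟩
  have h1 := hb μ f.1 f.2.2
  have h2 := hb ν f.1 f.2.2
  have := abs_sub (∫ x, f.1 x ∂μ) (∫ x, f.1 x ∂ν)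
  dsimp only
  linarith

/-- A measure carried by the `k`-torsion points is at distance at least `1 / (4 k)` from Lebesgue
measure; the test function is the distance to the torsion points. -/
lemma W_lower {k : ℕ} (hk : 1 < k) (μ : Measure (AddCircle (1 : ℝ))) [IsProbabilityMeasure μ]
    (h : ∀ᵐ x ∂μ, k • x = 0) : 1 / (4 * k : ℝ) ≤ W volume μ := by
  have hk0 : (0 : ℝ) < k := by exact_mod_cast (by omega : 0 < k)
  have hk1 : (1 : ℝ) ≤ k := by exact_mod_cast hk.le
  have : IsProbabilityMeasure (volume : Measure (AddCircle (1 : ℝ))) := ⟨by simp⟩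
  set g : AddCircle (1 : ℝ) → ℝ := fun x => (1 / (k : ℝ)) * ‖k • x‖ with hgdef
  have hlip : LipschitzWith 1 g := by
    refine LipschitzWith.of_dist_le_mul fun x y => ?_
    rw [Real.dist_eq, hgdef]
    dsimp only
    rw [← mul_sub, abs_mul, abs_of_pos (by positivity : 0 < 1 / (k : ℝ)), dist_eq_norm]
    have h1 := abs_norm_sub_norm_le (k • x) (k • y)
    rw [← smul_sub] at h1
    have h2 : ‖k • (x - y)‖ ≤ k * ‖x - y‖ := norm_nsmul_le
    rw [div_mul_eq_mul_div, one_mul, div_le_iff₀ hk0]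
    push_cast
    linarith
  have hbd : ∀ x, |g x| ≤ 1 := by
    intro x
    have h1 : ‖k • x‖ ≤ 1 / 2 := by
      simpa using AddCircle.norm_le_half_period (1 : ℝ) one_ne_zero (x := k • x)
    rw [abs_of_nonneg (by positivity), hgdef]
    dsimp only
    rw [div_mul_eq_mul_div, one_mul, div_le_iff₀ hk0]
    linarith
  have hW := le_W volume μ g hlip hbd
  have hv : ∫ x, g x = 1 / (4 * k : ℝ) := by
    rw [hgdef, integral_const_mul]
    have hmp := (AddCircle.ergodic_nsmul (T := (1 : ℝ)) hk).toMeasurePreserving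
    have h1 := integral_map (μ := volume) hmp.measurable.aemeasurable (f := fun x => ‖x‖)
      continuous_norm.aestronglyMeasurable
    rw [hmp.map_eq, integral_norm_circle] at h1
    rw [← h1]
    field_simp
  have hm : ∫ x, g x ∂μ = 0 := by
    apply integral_eq_zero_of_ae
    filter_upwards [h] with x hx
    simp [hgdef, hx]
  rw [hv, hm, sub_zero] at hW
  exact (le_abs_self _).trans hW

/-! ### The perturbed rotation and its size -/

lemma abs_iteratedDeriv_perturb_le {A s b δ : ℝ} {r : ℕ} (hs : 0 ≤ s) (hb : 1 ≤ b)
    (hA : |A| ≤ δ) (hsb : 2 * (s * b ^ r) ≤ δ) (n : ℕ) (hn : n ≤ r) (x : ℝ) :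
    |iteratedDeriv n (fun x : ℝ => A + s * (1 - Real.cos (b * x))) x| ≤ 2 * δ := by
  have hδ : 0 ≤ δ := (abs_nonneg A).trans hA
  rcases Nat.eq_zero_or_pos n with rfl | hpos
  · rw [iteratedDeriv_zero]
    have h1 : |s * (1 - Real.cos (b * x))| ≤ 2 * (s * b ^ r) := by
      have h2 := Real.cos_le_one (b * x)
      have h3 := Real.neg_one_le_cos (b * x)
      have h4 : 1 ≤ b ^ r := one_le_pow₀ hb
      rw [abs_of_nonneg (mul_nonneg hs (by linarith))]
      nlinarith [mul_le_mul_of_nonneg_left h4 hs, mul_nonneg hs (by linarith : 0 ≤ 1 + Real.cos (b * x))]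
    have := abs_add_le A (s * (1 - Real.cos (b * x)))
    linarith
  · have e : (fun x : ℝ => A + s * (1 - Real.cos (b * x))) =
        fun x : ℝ => (A + s) + (-s) * Real.cos (b * x) := by
      ext x; ring
    rw [e, iteratedDeriv_const_add hpos, iteratedDeriv_const_mul_field,
      iteratedDeriv_comp_const_mul Real.contDiff_cos]
    dsimp only
    rw [abs_mul, abs_neg, abs_of_nonneg hs, abs_mul, abs_of_nonneg (by positivity : 0 ≤ b ^ n)]
    have h1 := Real.abs_iteratedDeriv_cos_le_one n (b * x)
    have h2 : b ^ n ≤ b ^ r := pow_le_pow_right₀ hb hn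
    have h3 : b ^ n * |iteratedDeriv n Real.cos (b * x)| ≤ b ^ r := by
      calc _ ≤ b ^ n * 1 := by gcongr
        _ ≤ _ := by linarith
    have := mul_le_mul_of_nonneg_left h3 hs
    linarith

/-- A rotation number with a rational approximation `p / k` of quality `δ` admits a perturbation
of `C^r` size `2 δ` all of whose invariant measures live on the `k`-torsion points. -/
lemma exists_perturbation (α : ℝ) (r k : ℕ) (p : ℤ) (δ : ℝ) (hk : 1 < k) (hδ : 0 < δ)
    (hδ1 : δ ≤ 1) (hp : |p / k - α| ≤ δ) :
    ∃ (g : ℝ → ℝ) (T : AddCircle (1 : ℝ) → AddCircle (1 : ℝ)),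
      ContDiff ℝ (⊤ : ℕ∞) g ∧ Function.Periodic g 1 ∧
      (∀ x : ℝ, T (x : AddCircle (1 : ℝ)) = ((x + α + g x : ℝ) : AddCircle (1 : ℝ))) ∧
      Function.Bijective T ∧
      StrictMono (fun x : ℝ => x + α + g x) ∧
      (∀ n ≤ r, ∀ x : ℝ, |iteratedDeriv n g x| ≤ 2 * δ) ∧
      (∀ μ : Measure (AddCircle (1 : ℝ)), IsProbabilityMeasure μ → Measure.map T μ = μ →
        1 / (4 * k : ℝ) ≤ W volume μ) := by
  have hk0 : (0 : ℝ) < k := by exact_mod_cast (by omega : 0 < k)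
  have hk1 : (1 : ℝ) ≤ k := by exact_mod_cast hk.le
  set b : ℝ := 2 * Real.pi * k with hbdef
  have hb1 : 1 ≤ b := by nlinarith [Real.pi_gt_three]
  have hb0 : 0 < b := by linarith
  -- the exponent `r + 1` also controls `s * b`, which makes the lift increasing
  set s : ℝ := δ / (2 * b ^ (r + 1)) with hsdef
  have hs : 0 < s := by positivity
  have hsr1 : 2 * (s * b ^ (r + 1)) = δ := by rw [hsdef]; field_simp
  have hsr : 2 * (s * b ^ r) ≤ δ := by
    have : b ^ r ≤ b ^ (r + 1) := pow_le_pow_right₀ hb1 (by omega)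
    have := mul_le_mul_of_nonneg_left this hs.le
    linarith
  have hsb : s * b < 1 := by
    have : b ^ 1 ≤ b ^ (r + 1) := pow_le_pow_right₀ hb1 (by omega)
    have := mul_le_mul_of_nonneg_left this hs.le
    rw [pow_one] at this
    linarith
  set g : ℝ → ℝ := fun x => (p / k - α) + s * (1 - Real.cos (b * x)) with hg
  have hper : Function.Periodic g 1 := by
    intro x
    have : b * (x + 1) = b * x + (k : ℕ) * (2 * Real.pi) := by rw [hbdef]; ring
    simp only [hg]
    rw [this, Real.cos_add_nat_mul_two_pi]
  have hcd : ContDiff ℝ (⊤ : ℕ∞) g := by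
    have : ContDiff ℝ (⊤ : ℕ∞) (fun x : ℝ => Real.cos (b * x)) :=
      Real.contDiff_cos.comp (contDiff_const.mul contDiff_id)
    exact contDiff_const.add (contDiff_const.mul (contDiff_const.sub this))
  have hF : (fun x : ℝ => x + α + g x) =
      fun x : ℝ => x + (p / k : ℝ) + s * (1 - Real.cos (b * x)) := by
    ext x; simp only [hg]; ring
  have hmono : StrictMono (fun x : ℝ => x + α + g x) := by
    rw [hF]; exact strictMono_perturb hs hb0 hsb
  have hFp : Function.Periodic
      (fun x : ℝ => ((x + α + g x : ℝ) : AddCircle (1 : ℝ))) 1 := by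
    intro x
    have : x + 1 + α + g (x + 1) = (x + α + g x) + 1 := by rw [hper x]; ring
    simp only [this]
    exact AddCircle.coe_add_period 1 _
  have hFadd : ∀ (x : ℝ) (n : ℤ), (x + n) + α + g (x + n) = (x + α + g x) + n := by
    intro x n
    have h1 : g (x + n) = g x := by simpa using hper.int_mul n x
    rw [h1]; ring
  have hcoe : ∀ x : ℝ, hFp.lift (x : AddCircle (1 : ℝ)) =
      ((x + α + g x : ℝ) : AddCircle (1 : ℝ)) := fun x => hFp.lift_coe x
  refine ⟨g, hFp.lift, hcd, hper, hcoe, ⟨?_, ?_⟩, hmono, ?_, ?_⟩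
  · intro x y hxy
    induction x using QuotientAddGroup.induction_on with | H x => ?_
    induction y using QuotientAddGroup.induction_on with | H y => ?_
    rw [hcoe, hcoe, ← sub_eq_zero, ← AddCircle.coe_sub, AddCircle.coe_eq_zero_iff] at hxy
    obtain ⟨n, hn⟩ := hxy
    rw [zsmul_eq_mul, mul_one] at hn
    have h1 : x = y + n := hmono.injective (by
      rw [hFadd]; linarith)
    rw [← sub_eq_zero, ← AddCircle.coe_sub, AddCircle.coe_eq_zero_iff]
    exact ⟨n, by rw [h1, zsmul_eq_mul]; ring⟩
  · intro y
    induction y using QuotientAddGroup.induction_on with | H y => ?_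
    have hcont : Continuous (fun x : ℝ => x + α + g x) := by
      have := hcd.continuous
      fun_prop
    have hlow : ∀ x, p / k - α ≤ g x := by
      intro x
      have := Real.cos_le_one (b * x)
      have : 0 ≤ s * (1 - Real.cos (b * x)) := mul_nonneg hs.le (by linarith)
      simp only [hg]; linarith
    have hup : ∀ x, g x ≤ p / k - α + 2 * s := by
      intro x
      have := Real.neg_one_le_cos (b * x)
      have : s * (1 - Real.cos (b * x)) ≤ s * 2 := mul_le_mul_of_nonneg_left (by linarith) hs.le
      simp only [hg]; linarith
    have hsurj : Function.Surjective (fun x : ℝ => x + α + g x) := by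
      apply hcont.surjective
      · refine tendsto_atTop_mono (f := fun x : ℝ => x + (p / k : ℝ)) (fun x => ?_)
          (tendsto_atTop_add_const_right _ _ tendsto_id)
        linarith [hlow x]
      · refine tendsto_atBot_mono (f := fun x : ℝ => x + (p / k + 2 * s : ℝ)) (fun x => ?_)
          (tendsto_atBot_add_const_right _ _ tendsto_id)
        linarith [hup x]
    obtain ⟨x, hx⟩ := hsurj y
    exact ⟨(x : AddCircle (1 : ℝ)), by rw [hcoe]; exact congrArg _ hx⟩
  · exact fun n hn x => abs_iteratedDeriv_perturb_le hs.le hb1 hp hsr n hn x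
  · intro μ _ hμ
    refine W_lower hk μ (ae_nsmul_eq_zero (T := hFp.lift) (c := s * k) (by positivity) ?_ μ hμ)
    intro x
    induction x using QuotientAddGroup.induction_on with | H x => ?_
    rw [hcoe, cellCoord_coe]
    erw [cellCoord_coe]
    rw [← fract_perturb (by positivity) (by rw [hbdef] at hsb; linarith) p]
    congr 1
    have : x + α + g x = x + (p / k : ℝ) + s * (1 - Real.cos (b * x)) := congrFun hF x
    rw [this, hbdef]
    rw [mul_assoc (2 * Real.pi)]
    field_simp

/-! ### Choice of the approximations -/

/-- **Lower bounds: Hölder statistical stability is sharp.**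
Let `α` be irrational with Diophantine type `1 < γ(α) ≤ +∞` (encoded: there is
`γ ∈ dioSet α` with `γ' < γ`, where `1 ≤ γ'`).  For every `r ≥ 0` and every
`γ'` with `1 ≤ γ' < γ(α)` there are numbers `δ_j > 0` tending to `0` and `C^∞`
diffeomorphisms `T_j(x) = x + α + g_j(x)` of the circle, with `g_j : 𝕊¹ → ℝ` smooth
(i.e. smooth and `1`-periodic on `ℝ`) and `‖T_j − R_α‖_{C^r} ≤ 2 δ_j`, such that every
`T_j`-invariant Borel probability measure `μ_j` satisfies
`W(m, μ_j) ≥ (1/2) δ_j^{1/(γ'+1)}`. -/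
theorem holder_lower_bound_for_rotations
    (α : ℝ) (hα : Irrational α) (r : ℕ)
    (γ' : ℝ) (hγ'1 : 1 ≤ γ') (hγ'lt : ∃ γ ∈ dioSet α, γ' < γ) :
    ∃ (δ : ℕ → ℝ) (g : ℕ → ℝ → ℝ)
      (T : ℕ → AddCircle (1:ℝ) → AddCircle (1:ℝ)),
      (∀ j, 0 < δ j) ∧
      Tendsto δ atTop (nhds 0) ∧
      (∀ j, ContDiff ℝ (⊤ : ℕ∞) (g j)) ∧
      (∀ j, Function.Periodic (g j) 1) ∧
      (∀ j, ∀ x : ℝ, T j ((x : ℝ) : AddCircle (1:ℝ)) = ((x + α + g j x : ℝ) : AddCircle (1:ℝ))) ∧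
      (∀ j, Function.Bijective (T j)) ∧
      (∀ j, StrictMono (fun x : ℝ => x + α + g j x)) ∧
      (∀ j, ∀ k ≤ r, ∀ x : ℝ, |iteratedDeriv k (g j) x| ≤ 2 * δ j) ∧
      (∀ j, ∀ μ : Measure (AddCircle (1:ℝ)), IsProbabilityMeasure μ →
        Measure.map (T j) μ = μ →
        (1 / 2) * δ j ^ ((1:ℝ) / (γ' + 1)) ≤ W volume μ) := by
  obtain ⟨γ, ⟨-, hlim⟩, hγ⟩ := hγ'lt
  have hε : (0 : ℝ) < 2 ^ (-(γ' + 1)) := by positivity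
  have hfreq := frequently_lt_of_liminf_lt (b := ENNReal.ofReal (2 ^ (-(γ' + 1))))
    (by isBoundedDefault) (by rw [hlim]; exact ENNReal.ofReal_pos.2 hε)
  rw [frequently_atTop] at hfreq
  choose k hkj hk using fun j : ℕ => hfreq (j + 2)
  have hk1 : ∀ j, 1 < k j := fun j => by have := hkj j; omega
  have hk0 : ∀ j, (0 : ℝ) < k j := fun j => by exact_mod_cast (by have := hk1 j; omega : 0 < k j)
  have hkR : ∀ j, (1 : ℝ) ≤ k j := fun j => by exact_mod_cast (hk1 j).le
  set δ : ℕ → ℝ := fun j => (2 * (k j : ℝ)) ^ (-(γ' + 1)) with hδdef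
  have hδ0 : ∀ j, 0 < δ j := fun j => Real.rpow_pos_of_pos (by linarith [hk0 j]) _
  have hδle : ∀ j, δ j ≤ 1 / ((j : ℝ) + 1) := by
    intro j
    have h2 : δ j ≤ (2 * (k j : ℝ)) ^ (-1 : ℝ) :=
      Real.rpow_le_rpow_of_exponent_le (by linarith [hkR j]) (by linarith)
    have h3 : (j : ℝ) + 2 ≤ k j := by exact_mod_cast hkj j
    rw [Real.rpow_neg_one] at h2
    refine h2.trans ?_
    rw [one_div]
    apply inv_anti₀ (by positivity)
    linarith [hk0 j]
  -- `|p / k - α| = ‖kα‖ / k`, and `‖kα‖ < 2^{-(γ' + 1)} k^{-γ'} = k δ`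
  have happ : ∀ j, |(round (k j * α) : ℝ) / k j - α| ≤ δ j := by
    intro j
    have h1 := hk j
    rw [ENNReal.ofReal_lt_ofReal_iff hε] at h1
    have h2 : (k j : ℝ) ^ γ' * distInt (k j * α) < 2 ^ (-(γ' + 1)) := by
      refine lt_of_le_of_lt (mul_le_mul_of_nonneg_right ?_ (abs_nonneg _)) h1
      exact Real.rpow_le_rpow_of_exponent_le (hkR j) hγ.le
    have h3 : |(round (k j * α) : ℝ) / k j - α| = distInt (k j * α) / k j := by
      rw [distInt, abs_sub_comm, ← abs_of_pos (hk0 j), ← abs_div, abs_of_pos (hk0 j)]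
      congr 1
      have := (hk0 j).ne'
      field_simp
    have h4 : δ j = 2 ^ (-(γ' + 1)) / ((k j : ℝ) ^ γ' * k j) := by
      simp only [hδdef]
      rw [Real.mul_rpow (by norm_num) (hk0 j).le, Real.rpow_neg (hk0 j).le (γ' + 1),
        Real.rpow_add_one (hk0 j).ne', div_eq_mul_inv]
    have h5 : (0 : ℝ) < (k j : ℝ) ^ γ' := Real.rpow_pos_of_pos (hk0 j) _
    rw [h3, h4, ← div_div]
    apply div_le_div_of_nonneg_right _ (hk0 j).le
    rw [le_div_iff₀ h5]
    linarith
  have hδ1 : ∀ j, δ j ≤ 1 := by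
    intro j
    refine (hδle j).trans ?_
    rw [div_le_one (by positivity)]
    linarith [(Nat.cast_nonneg j : (0 : ℝ) ≤ j)]
  choose g T h1 h2 h3 h4 h5 h6 h7 using fun j =>
    exists_perturbation α r (k j) (round (k j * α)) (δ j) (hk1 j) (hδ0 j) (hδ1 j) (happ j)
  refine ⟨δ, g, T, hδ0, ?_, h1, h2, h3, h4, h5, h6, ?_⟩
  · exact squeeze_zero (fun j => (hδ0 j).le) hδle tendsto_one_div_add_atTop_nhds_zero_nat
  · intro j μ hμ hinv
    refine le_trans (le_of_eq ?_) (h7 j μ hμ hinv)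
    have : δ j ^ ((1:ℝ) / (γ' + 1)) = (2 * (k j : ℝ))⁻¹ := by
      simp only [hδdef]
      rw [← Real.rpow_mul (by linarith [hk0 j]), ← Real.rpow_neg_one]
      congr 1
      have : γ' + 1 ≠ 0 := by linarith
      field_simp
    rw [this]
    have := (hk0 j).ne'
    field_simp
    norm_num
end

section
/- Let τ > 1 and let α ∈ 𝒟(τ) be a Diophantine number. Let u : 𝕊¹ → ℝ be a C^∞ function with Fourier coefficients û(n) := ∫_{𝕊¹} u(x) e^{−2πinx} dm(x). Then the function v : 𝕊¹ → ℝ defined by the Fourier series v(x) := Σ_{n ∈ ℤ∖{0}} (û(n)/(e^{2πinα} − 1)) e^{2πinx} is a well-defined C^∞ function and solves the homological equation v(x + α) − v(x) = u(x) − ∫_{𝕊¹} u dm for every x ∈ 𝕊¹. -/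
/-!
Smoothness of `u` makes `û(n)` decay faster than every power of `|n|` (`fourierCoef_decay`,
repeated integration by parts). The Diophantine condition, applied with `p` the integer nearest to
`nα`, bounds `|e^{2πinα} - 1| ≥ 4 |nα - p|` below by a fixed negative power of `|n|`
(`small_divisor`). Hence the quotients still decay rapidly (`summable_pow_mul_solCoef`), and the
series may be differentiated term by term any number of times. Conjugation swaps the terms `n` and
`-n`, so the sum is real. Translating by `α` multiplies the `n`-th term by `e^{2πinα}`, so in
`v(x + α) - v(x)` the divisors cancel, leaving the Fourier series of `u` without its constant term;
that series converges to `u` pointwise because its coefficients are summable.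
-/

open MeasureTheory Filter Topology Real Complex

/-- `α` is `(c,τ)`-Diophantine: `|α − p/q| > c/|q|^{1+τ}` for every nonzero rational
`p/q`. -/
def IsDiophantineWith (c τ α : ℝ) : Prop :=
  ∀ p q : ℤ, q ≠ 0 → (p : ℝ) / q ≠ 0 → c / |(q : ℝ)| ^ (1 + τ) < |α - p / q|

/-- `α ∈ 𝒟(τ)`: `α ∈ (0,1)` is `(c,τ)`-Diophantine for some `c > 0`. -/
def IsDiophantine (τ α : ℝ) : Prop :=
  α ∈ Set.Ioo (0:ℝ) 1 ∧ ∃ c > (0:ℝ), IsDiophantineWith c τ α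

/-- The `n`-th Fourier coefficient `û(n) = ∫₀¹ u(x) e^{−2πinx} dx` of a `1`-periodic
function `u : ℝ → ℝ`. -/
noncomputable def fourierCoef (u : ℝ → ℝ) (n : ℤ) : ℂ :=
  ∫ x in (0:ℝ)..1, (u x : ℂ) * Complex.exp (-(2 * (π : ℂ) * Complex.I * (n : ℂ) * (x : ℂ)))

/-- The formal solution `v(x) = Σ_{n ≠ 0} (û(n)/(e^{2πinα} − 1)) e^{2πinx}` of the
homological equation. -/
noncomputable def homolSol (u : ℝ → ℝ) (α : ℝ) (x : ℝ) : ℂ :=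
  ∑' n : {n : ℤ // n ≠ 0},
    (fourierCoef u n.1 / (Complex.exp (2 * (π : ℂ) * Complex.I * (n.1 : ℂ) * (α : ℂ)) - 1))
      * Complex.exp (2 * (π : ℂ) * Complex.I * (n.1 : ℂ) * (x : ℂ))

/-! ### The exponentials `e^{2πinx}` -/

/-- `mode n x = e^{2πinx}`, with the exponent in the syntactic form used by `homolSol`, so that
unfolding is definitional. -/
noncomputable def mode (n : ℤ) (x : ℝ) : ℂ :=
  Complex.exp (2 * (π : ℂ) * Complex.I * (n : ℂ) * (x : ℂ))

lemma norm_mode (n : ℤ) (x : ℝ) : ‖mode n x‖ = 1 := by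
  rw [mode, show 2 * (π : ℂ) * Complex.I * (n : ℂ) * (x : ℂ)
    = ((2 * π * n * x : ℝ) : ℂ) * Complex.I by push_cast; ring]
  exact Complex.norm_exp_ofReal_mul_I _

lemma mode_add (n : ℤ) (x y : ℝ) : mode n (x + y) = mode n x * mode n y := by
  rw [mode, mode, mode, ← Complex.exp_add]
  congr 1; push_cast; ring

lemma conj_mode (n : ℤ) (x : ℝ) : (starRingEnd ℂ) (mode n x) = mode (-n) x := by
  rw [mode, mode, ← Complex.exp_conj]
  congr 1
  rw [map_mul, map_mul, map_mul, map_mul, Complex.conj_I, Complex.conj_ofReal, Complex.conj_ofReal,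
    map_intCast, map_ofNat]
  push_cast; ring

lemma mode_one (n : ℤ) : mode n 1 = 1 := by
  rw [mode, Complex.exp_eq_one_iff]
  exact ⟨n, by push_cast; ring⟩

lemma hasDerivAt_mode (n : ℤ) (x : ℝ) :
    HasDerivAt (mode n) (2 * (π : ℂ) * Complex.I * (n : ℂ) * mode n x) x := by
  have h : HasDerivAt (fun y : ℝ => 2 * (π : ℂ) * Complex.I * (n : ℂ) * (y : ℂ))
      (2 * (π : ℂ) * Complex.I * (n : ℂ)) x := by
    simpa using (Complex.ofRealCLM.hasDerivAt (x := x)).const_mul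
      (2 * (π : ℂ) * Complex.I * (n : ℂ))
  have h2 := h.cexp
  rw [mul_comm (Complex.exp _)] at h2
  exact h2

lemma contDiff_mode (n : ℤ) {N : WithTop ℕ∞} : ContDiff ℝ N (mode n) := by
  unfold mode
  exact (contDiff_const.mul Complex.ofRealCLM.contDiff).cexp

lemma iteratedDeriv_const_mul_mode (a : ℂ) (n : ℤ) (k : ℕ) :
    iteratedDeriv k (fun x => a * mode n x)
      = fun x => a * ((2 * (π : ℂ) * Complex.I * (n : ℂ)) ^ k * mode n x) := by
  induction k with
  | zero => simp
  | succ k ih =>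
    rw [iteratedDeriv_succ, ih]
    funext x
    rw [(((hasDerivAt_mode n x).const_mul _).const_mul a).deriv]
    ring

/-! ### Decay of the Fourier coefficients -/

lemma fourierCoef_eq (u : ℝ → ℝ) (n : ℤ) :
    fourierCoef u n = ∫ x in (0:ℝ)..1, (u x : ℂ) * mode (-n) x := by
  simp only [fourierCoef, mode]
  refine intervalIntegral.integral_congr fun x _ => ?_
  congr 2
  push_cast; ring

/-- Integration by parts; the boundary terms cancel by periodicity. -/
lemma fourierCoef_deriv {u : ℝ → ℝ} (hu : ContDiff ℝ (⊤ : ℕ∞) u)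
    (huper : Function.Periodic u 1) (n : ℤ) :
    fourierCoef (deriv u) n = 2 * (π : ℂ) * Complex.I * (n : ℂ) * fourierCoef u n := by
  have hu1 : ContDiff ℝ 1 u := hu.of_le (by exact_mod_cast le_top)
  have hd : ∀ x, HasDerivAt (fun y : ℝ => (u y : ℂ)) ((deriv u x : ℝ) : ℂ) x := fun x =>
    ((hu1.differentiable one_ne_zero x).hasDerivAt).ofReal_comp
  have hc : Continuous (fun x => ((deriv u x : ℝ) : ℂ)) :=
    Complex.continuous_ofReal.comp (hu1.continuous_deriv le_rfl)
  have hm : Continuous (mode (-n)) := (contDiff_mode (N := 0) (-n)).continuous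
  have key := intervalIntegral.integral_mul_deriv_eq_deriv_mul (a := 0) (b := 1)
    (u := mode (-n)) (v := fun y : ℝ => (u y : ℂ))
    (fun x _ => hasDerivAt_mode (-n) x) (fun x _ => hd x)
    ((continuous_const.mul hm).intervalIntegrable _ _) (hc.intervalIntegrable _ _)
  have h0 : mode (-n) 0 = 1 := by simp [mode]
  have hu0 : u 1 = u 0 := by simpa using huper 0
  rw [mode_one, h0, hu0] at key
  rw [fourierCoef_eq, fourierCoef_eq, ← intervalIntegral.integral_const_mul]
  simp only [mul_comm _ (mode (-n) _)]
  rw [key, sub_self, zero_sub, ← intervalIntegral.integral_neg]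
  refine intervalIntegral.integral_congr fun x _ => ?_
  push_cast; ring

lemma periodic_deriv {u : ℝ → ℝ} (huper : Function.Periodic u 1) :
    Function.Periodic (deriv u) 1 := fun x => by
  rw [← deriv_comp_add_const]
  congr 1
  exact funext huper

/-- Fourier coefficients of a smooth periodic function decay faster than any power. -/
lemma fourierCoef_decay (k : ℕ) : ∀ {u : ℝ → ℝ}, ContDiff ℝ (⊤ : ℕ∞) u →
    Function.Periodic u 1 → ∃ C : ℝ, ∀ n : ℤ, |(n : ℝ)| ^ k * ‖fourierCoef u n‖ ≤ C := by
  induction k with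
  | zero =>
    intro u hu _
    refine ⟨∫ x in (0:ℝ)..1, |u x|, fun n => ?_⟩
    rw [pow_zero, one_mul, fourierCoef_eq]
    refine (intervalIntegral.norm_integral_le_integral_norm zero_le_one).trans (le_of_eq ?_)
    simp [norm_mode]
  | succ k ih =>
    intro u hu huper
    have hu' : ContDiff ℝ (⊤ : ℕ∞) (deriv u) := by
      rw [contDiff_infty_iff_deriv] at hu
      exact hu.2
    obtain ⟨C, hC⟩ := ih hu' (periodic_deriv huper)
    refine ⟨C, fun n => le_trans ?_ (hC n)⟩
    rw [fourierCoef_deriv hu huper, norm_mul, pow_succ, mul_assoc]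
    have h1 : |(n : ℝ)| ≤ ‖2 * (π : ℂ) * Complex.I * (n : ℂ)‖ := by
      simp only [norm_mul, Complex.norm_I, Complex.norm_real, Complex.norm_intCast,
        Complex.norm_ofNat, mul_one, Real.norm_eq_abs, abs_of_pos Real.pi_pos]
      nlinarith [Real.pi_gt_three, abs_nonneg (n : ℝ)]
    gcongr

/-! ### Small divisors -/

/-- The distance from `e^{2πit}` to `1` is at least four times the distance from `t` to `ℤ`. -/
lemma four_mul_dist_round_le (t : ℝ) :
    4 * |t - round t| ≤ ‖Complex.exp (2 * (π : ℂ) * Complex.I * (t : ℂ)) - 1‖ := by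
  have hs := Real.mul_abs_le_abs_sin (x := π * (t - round t)) (by
    rw [abs_mul, abs_of_pos Real.pi_pos]
    nlinarith [abs_sub_round t, Real.pi_pos])
  have he : Complex.exp (2 * (π : ℂ) * Complex.I * (t : ℂ))
      = Complex.exp (Complex.I * ((2 * π * (t - round t) : ℝ) : ℂ)) := by
    rw [Complex.exp_eq_exp_iff_exists_int]
    exact ⟨round t, by push_cast; ring⟩
  -- `|e^{iθ} - 1| = 2 |sin (θ/2)|`, and Jordan's inequality bounds the sine.
  rw [he, Complex.norm_exp_I_mul_ofReal_sub_one, norm_mul, Real.norm_eq_abs, Real.norm_eq_abs,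
    show 2 * π * (t - round t) / 2 = π * (t - round t) by ring, abs_two]
  rw [abs_mul, abs_of_pos Real.pi_pos, ← mul_assoc, div_mul_cancel₀ _ Real.pi_ne_zero] at hs
  linarith

/-- The Diophantine condition bounds the small divisors `e^{2πinα} - 1` below by a negative
power of `|n|`. -/
lemma small_divisor {τ α : ℝ} (hα : IsDiophantine τ α) :
    ∃ δ > (0:ℝ), ∃ N : ℕ, ∀ n : ℤ, n ≠ 0 → δ ≤ |(n : ℝ)| ^ N * ‖mode n α - 1‖ := by
  obtain ⟨⟨hα0, -⟩, c, hc, hD⟩ := hα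
  refine ⟨min c α, lt_min hc hα0, ⌈1 + τ⌉₊, fun n hn => ?_⟩
  have hn1 : (1 : ℝ) ≤ |(n : ℝ)| := by exact_mod_cast Int.one_le_abs hn
  have hn0 : (n : ℝ) ≠ 0 := by exact_mod_cast hn
  have hN1 : (1 : ℝ) ≤ |(n : ℝ)| ^ ⌈1 + τ⌉₊ := one_le_pow₀ hn1
  set p := round ((n : ℝ) * α) with hp
  have h4 : 4 * |(n : ℝ) * α - p| ≤ ‖mode n α - 1‖ := by
    have := four_mul_dist_round_le ((n : ℝ) * α)
    rwa [show 2 * (π : ℂ) * Complex.I * (((n : ℝ) * α : ℝ) : ℂ)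
      = 2 * (π : ℂ) * Complex.I * (n : ℂ) * (α : ℂ) by push_cast; ring] at this
  have hge : |α - p / n| ≤ |(n : ℝ) * α - p| := by
    rw [show (n : ℝ) * α - p = n * (α - p / n) by field_simp, abs_mul]
    nlinarith [abs_nonneg (α - p / n)]
  have hle : |α - p / n| ≤ ‖mode n α - 1‖ := by linarith [abs_nonneg ((n : ℝ) * α - p)]
  by_cases hp0 : (p : ℝ) / n = 0
  · -- The hypothesis says nothing about `p = 0`; there `n * α` itself is at least `α`.
    rw [hp0, sub_zero, abs_of_pos hα0] at hle
    exact (min_le_right _ _).trans (hle.trans (le_mul_of_one_le_left (norm_nonneg _) hN1))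
  · have h := hD p n hn hp0
    have hpos : 0 < |(n : ℝ)| ^ (1 + τ) := Real.rpow_pos_of_pos (by linarith) _
    rw [div_lt_iff₀ hpos] at h
    have hpow : |(n : ℝ)| ^ (1 + τ) ≤ |(n : ℝ)| ^ ⌈1 + τ⌉₊ := by
      rw [← Real.rpow_natCast]
      exact Real.rpow_le_rpow_of_exponent_le hn1 (Nat.le_ceil _)
    calc min c α ≤ c := min_le_left _ _
      _ ≤ |α - p / n| * |(n : ℝ)| ^ (1 + τ) := h.le
      _ ≤ ‖mode n α - 1‖ * |(n : ℝ)| ^ ⌈1 + τ⌉₊ := by gcongr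
      _ = _ := mul_comm _ _

/-! ### The formal solution is smooth and real -/

/-- The coefficients `û(n)/(e^{2πinα} - 1)` of the formal solution. At `n = 0` this is `0`, by
division by zero. -/
noncomputable def solCoef (u : ℝ → ℝ) (α : ℝ) (n : ℤ) : ℂ :=
  fourierCoef u n / (mode n α - 1)

lemma homolSol_eq (u : ℝ → ℝ) (α : ℝ) :
    homolSol u α = fun x => ∑' n : {n : ℤ // n ≠ 0}, solCoef u α n.1 * mode n.1 x := rfl

lemma summable_inv_sq : Summable (fun n : {n : ℤ // n ≠ 0} => 1 / (n.1 : ℝ) ^ 2) :=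
  (Real.summable_one_div_int_pow.mpr one_lt_two).subtype {n : ℤ | n ≠ 0}

/-- Dividing by the small divisors costs only a fixed power of `|n|`, so rapid decay survives. -/
lemma summable_pow_mul_solCoef {τ α : ℝ} (hα : IsDiophantine τ α)
    {u : ℝ → ℝ} (hu : ContDiff ℝ (⊤ : ℕ∞) u) (huper : Function.Periodic u 1) (k : ℕ) :
    Summable (fun n : {n : ℤ // n ≠ 0} => |(n.1 : ℝ)| ^ k * ‖solCoef u α n.1‖) := by
  obtain ⟨δ, hδ, N, hN⟩ := small_divisor hα
  obtain ⟨C, hC⟩ := fourierCoef_decay (k + 2 + N) hu huper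
  refine Summable.of_nonneg_of_le (fun n => by positivity) (fun n => ?_)
    (summable_inv_sq.mul_left (C / δ))
  obtain ⟨n, hn⟩ := n
  have hn0 : 0 < |(n : ℝ)| := by positivity
  have h1 := hN n hn
  have h2 := hC n
  have hd : 0 < ‖mode n α - 1‖ := by
    by_contra h
    have : ‖mode n α - 1‖ = 0 := le_antisymm (not_lt.mp h) (norm_nonneg _)
    rw [this, mul_zero] at h1
    linarith
  simp only
  rw [solCoef, norm_div, ← sq_abs, mul_one_div, div_div, mul_div_assoc',
    div_le_div_iff₀ hd (by positivity)]
  calc |(n : ℝ)| ^ k * ‖fourierCoef u n‖ * (δ * |(n : ℝ)| ^ 2)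
      ≤ |(n : ℝ)| ^ k * ‖fourierCoef u n‖ *
          ((|(n : ℝ)| ^ N * ‖mode n α - 1‖) * |(n : ℝ)| ^ 2) := by gcongr
    _ = |(n : ℝ)| ^ (k + 2 + N) * ‖fourierCoef u n‖ * ‖mode n α - 1‖ := by ring
    _ ≤ C * ‖mode n α - 1‖ := by gcongr

lemma summable_solCoef_mul_mode {τ α : ℝ} (hα : IsDiophantine τ α)
    {u : ℝ → ℝ} (hu : ContDiff ℝ (⊤ : ℕ∞) u) (huper : Function.Periodic u 1) (x : ℝ) :
    Summable (fun n : {n : ℤ // n ≠ 0} => solCoef u α n.1 * mode n.1 x) := by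
  refine Summable.of_norm ?_
  simpa [norm_mode] using summable_pow_mul_solCoef hα hu huper 0

lemma contDiff_homolSol {τ α : ℝ} (hα : IsDiophantine τ α)
    {u : ℝ → ℝ} (hu : ContDiff ℝ (⊤ : ℕ∞) u) (huper : Function.Periodic u 1) :
    ContDiff ℝ (⊤ : ℕ∞) (homolSol u α) := by
  rw [homolSol_eq]
  refine contDiff_tsum
    (v := fun k (n : {n : ℤ // n ≠ 0}) => (2 * π) ^ k * (|(n.1 : ℝ)| ^ k * ‖solCoef u α n.1‖))
    (fun n => contDiff_const.mul (contDiff_mode n.1))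
    (fun k _ => (summable_pow_mul_solCoef hα hu huper k).mul_left ((2 * π) ^ k))
    fun k n x _ => ?_
  rw [norm_iteratedFDeriv_eq_norm_iteratedDeriv, iteratedDeriv_const_mul_mode]
  simp only [norm_mul, norm_pow, norm_mode, Complex.norm_I, Complex.norm_real,
    Complex.norm_intCast, Complex.norm_ofNat, mul_one, Real.norm_eq_abs, abs_of_pos Real.pi_pos]
  exact le_of_eq (by ring)

lemma conj_fourierCoef (u : ℝ → ℝ) (n : ℤ) :
    (starRingEnd ℂ) (fourierCoef u n) = fourierCoef u (-n) := by
  rw [fourierCoef_eq, fourierCoef_eq, intervalIntegral.integral_of_le zero_le_one,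
    intervalIntegral.integral_of_le zero_le_one, ← integral_conj]
  simp [conj_mode]

/-- Since `u` is real, conjugation exchanges the terms of index `n` and `-n`. -/
lemma im_homolSol (u : ℝ → ℝ) (α x : ℝ) : (homolSol u α x).im = 0 := by
  rw [← Complex.conj_eq_iff_im, homolSol_eq]
  simp only
  rw [Complex.conj_tsum]
  let e : {n : ℤ // n ≠ 0} ≃ {n : ℤ // n ≠ 0} :=
    (Equiv.neg ℤ).subtypeEquiv fun n => by simp
  rw [← e.tsum_eq]
  refine tsum_congr fun n => ?_
  simp [e, solCoef, conj_fourierCoef, conj_mode]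

/-! ### The cohomological equation -/

/-- The Fourier series of `u` converges pointwise to `u`. -/
lemma hasSum_fourierCoef_mul_mode {u : ℝ → ℝ} (hu : ContDiff ℝ (⊤ : ℕ∞) u)
    (huper : Function.Periodic u 1) (x : ℝ) :
    HasSum (fun n : ℤ => fourierCoef u n * mode n x) (u x : ℂ) := by
  have : Fact ((0:ℝ) < 1) := ⟨one_pos⟩
  have hper : Function.Periodic (fun y : ℝ => (u y : ℂ)) 1 := fun y => by simp only [huper y]
  have hcont : Continuous (hper.lift : AddCircle (1:ℝ) → ℂ) :=
    continuous_quot_lift _ (Complex.continuous_ofReal.comp hu.continuous)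
  have hmode : ∀ (n : ℤ) (y : ℝ), fourier n (y : AddCircle (1:ℝ)) = mode n y := fun n y => by
    rw [fourier_coe_apply, mode]; simp
  have hcoef : ∀ n, fourierCoeff (hper.lift : AddCircle (1:ℝ) → ℂ) n = fourierCoef u n := by
    intro n
    rw [fourierCoeff_eq_intervalIntegral _ n 0, fourierCoef_eq]
    simp only [hmode, Function.Periodic.lift_coe, zero_add, div_one, one_smul, smul_eq_mul,
      mul_comm]
  have hsum : Summable (fourierCoeff (⟨hper.lift, hcont⟩ : C(AddCircle (1:ℝ), ℂ))) := by
    obtain ⟨C, hC⟩ := fourierCoef_decay 2 hu huper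
    refine Summable.of_norm_bounded_eventually
      ((Real.summable_one_div_int_pow.mpr one_lt_two).mul_left C) ?_
    have h0 : ∀ᶠ n : ℤ in cofinite, n ≠ 0 := eventually_cofinite_ne 0
    filter_upwards [h0] with n hn
    have hn0 : 0 < |(n : ℝ)| := by positivity
    rw [ContinuousMap.coe_mk, hcoef, ← sq_abs, mul_one_div, le_div_iff₀ (by positivity), mul_comm]
    exact hC n
  have h := has_pointwise_sum_fourier_series_of_summable hsum (x : AddCircle (1:ℝ))
  simpa only [ContinuousMap.coe_mk, hcoef, hmode, smul_eq_mul, Function.Periodic.lift_coe] using h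

/-- The divisors `e^{2πinα} - 1` cancel, leaving the Fourier series of `u` without its `n = 0`
term, which is the mean of `u`. -/
lemma homolSol_cohomological {τ α : ℝ} (hα : IsDiophantine τ α)
    {u : ℝ → ℝ} (hu : ContDiff ℝ (⊤ : ℕ∞) u) (huper : Function.Periodic u 1) (x : ℝ) :
    homolSol u α (x + α) - homolSol u α x
      = (u x : ℂ) - ((∫ t in (0:ℝ)..1, u t : ℝ) : ℂ) := by
  obtain ⟨δ, hδ, N, hN⟩ := small_divisor hα
  have hF := hasSum_fourierCoef_mul_mode hu huper x
  have h0 : fourierCoef u 0 * mode 0 x = ((∫ t in (0:ℝ)..1, u t : ℝ) : ℂ) := by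
    simp [fourierCoef, mode, intervalIntegral.integral_ofReal]
  have hsplit := hF.summable.sum_add_tsum_subtype_compl {0}
  rw [hF.tsum_eq, Finset.sum_singleton, h0] at hsplit
  rw [← hsplit, add_sub_cancel_left, homolSol_eq]
  simp only
  rw [← (summable_solCoef_mul_mode hα hu huper (x + α)).tsum_sub
    (summable_solCoef_mul_mode hα hu huper x)]
  have e : ∀ n : ℤ, n ≠ 0 ↔ n ∉ ({0} : Finset ℤ) := fun n => by simp
  rw [← (Equiv.subtypeEquivRight e).tsum_eq]
  refine tsum_congr fun n => ?_
  obtain ⟨n, hn⟩ := n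
  have hd : mode n α - 1 ≠ 0 := fun h => by
    have := hN n hn
    rw [h, norm_zero, mul_zero] at this
    linarith
  simp only [Equiv.subtypeEquivRight_apply_coe, mode_add, solCoef]
  field_simp

/-- **Solution of the homological equation for Diophantine rotations.**
If `τ > 1`, `α ∈ 𝒟(τ)` and `u : 𝕊¹ → ℝ` is `C^∞` (a smooth `1`-periodic function on
`ℝ`), then the Fourier series `v(x) = Σ_{n≠0} (û(n)/(e^{2πinα}−1)) e^{2πinx}` is
well defined (summable), `C^∞`, real valued, and solves
`v(x + α) − v(x) = u(x) − ∫_{𝕊¹} u dm` for every `x`. -/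
theorem homological_equation_solution
    (τ α : ℝ) (hτ : 1 < τ) (hα : IsDiophantine τ α)
    (u : ℝ → ℝ) (hu : ContDiff ℝ (⊤ : ℕ∞) u) (huper : Function.Periodic u 1) :
    (∀ x : ℝ, Summable (fun n : {n : ℤ // n ≠ 0} =>
      (fourierCoef u n.1 / (Complex.exp (2 * (π : ℂ) * Complex.I * (n.1 : ℂ) * (α : ℂ)) - 1))
        * Complex.exp (2 * (π : ℂ) * Complex.I * (n.1 : ℂ) * (x : ℂ)))) ∧
    ContDiff ℝ (⊤ : ℕ∞) (homolSol u α) ∧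
    (∀ x : ℝ, (homolSol u α x).im = 0) ∧
    (∀ x : ℝ, homolSol u α (x + α) - homolSol u α x
      = (u x : ℂ) - ((∫ t in (0:ℝ)..1, u t : ℝ) : ℂ)) := by
  exact ⟨summable_solCoef_mul_mode hα hu huper, contDiff_homolSol hα hu huper,
    im_homolSol u α, homolSol_cohomological hα hu huper⟩
end

section
/- Let T₀ : 𝕊¹ → 𝕊¹ be an orientation-preserving C¹ diffeomorphism of the circle whose rotation number α is irrational and such that log(T₀′) has bounded variation (for example, T₀ of class C²). Let μ₀ be a T₀-invariant Borel probability measure (it is unique by Denjoy's theorem). Let δ̄ > 0 and let (T_δ)_{δ ∈ (0, δ̄]} be Borel measurable maps of 𝕊¹ with sup_{x ∈ 𝕊¹} d(T₀(x), T_δ(x)) ≤ δ, and for each δ let μ_δ be a T_δ-invariant Borel probability measure. Then for every continuous function f : 𝕊¹ → ℝ, lim_{δ → 0} ∫ f dμ_δ = ∫ f dμ₀. -/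
/-!
Every orientation-preserving circle homeomorphism with irrational rotation number is uniquely
ergodic, and unique ergodicity forces statistical stability.

*Unique ergodicity.* An invariant probability measure `μ` on the circle lifts to the measure
`ν = liftMeasure μ` on `ℝ`, which gives mass one to each interval `(a, a + 1]` and satisfies
`ν (F ⁻¹' A) = ν A` for the lift `F` of the map. Its distribution function `H`, normalised by
`H 0 = 0`, is monotone, commutes with the translation by one, and satisfies `H ∘ F = H + ρ` for some
constant `ρ`; since `H - id` is bounded, `ρ` is the rotation number `α`
(`liftCDF_comp_lift`). Hence `H` takes the value `n α + m` at `F^[n] 0 + m`. As `α` is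
irrational these values are dense, and a monotone function is determined by such data
(`le_of_monotone_semiconj`). So any two invariant measures have the same `H`, and they coincide
(`invariant_measure_unique`).

*Stability.* The space of probability measures on the circle is compact. If `μ_δ` tends weakly to a
measure `P` along an ultrafilter finer than `δ → 0`, then `P` is `T₀`-invariant, because
`∫ f ∘ T₀ dμ_δ - ∫ f dμ_δ = ∫ (f ∘ T₀ - f ∘ T_δ) dμ_δ` and `f` is uniformly continuous; so
`P = μ₀`.
-/

open MeasureTheory Filter Topology

namespace CircleStability

/-! ### Lifting measures from the circle to the line -/

/-- The representative in `(0, 1]` of a point of the circle. -/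
noncomputable def rep (t : AddCircle (1:ℝ)) : ℝ := (AddCircle.measurableEquivIoc (1:ℝ) 0 t : ℝ)

lemma measurable_rep : Measurable rep :=
  measurable_subtype_coe.comp (AddCircle.measurableEquivIoc (1:ℝ) 0).measurable

lemma coe_rep (t : AddCircle (1:ℝ)) : ((rep t : ℝ) : AddCircle (1:ℝ)) = t :=
  (AddCircle.measurableEquivIoc (1:ℝ) 0).left_inv t

lemma exists_int_of_coe_eq {x y : ℝ} (h : (x : AddCircle (1:ℝ)) = (y : AddCircle (1:ℝ))) :
    ∃ k : ℤ, x = y + k := by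
  obtain ⟨k, hk⟩ := (QuotientAddGroup.eq_iff_sub_mem.1 h)
  exact ⟨k, by simp at hk; linarith⟩

/-- The `ℤ`-periodic lift to `ℝ` of a measure on the circle: the sum over `n` of the translates by
`n` of its copy on `(0, 1]`. -/
noncomputable def liftMeasure (μ : Measure (AddCircle (1:ℝ))) : Measure ℝ :=
  Measure.sum fun n : ℤ => μ.map fun t => rep t + n

lemma liftMeasure_apply (μ : Measure (AddCircle (1:ℝ))) {A : Set ℝ} (hA : MeasurableSet A) :
    liftMeasure μ A = ∫⁻ t, ∑' n : ℤ, A.indicator 1 (rep t + n) ∂μ := by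
  have hm : ∀ n : ℤ, Measurable fun t => rep t + (n:ℝ) := fun n => measurable_rep.add_const _
  rw [liftMeasure, Measure.sum_apply _ hA, lintegral_tsum]
  · refine tsum_congr fun n => ?_
    rw [← lintegral_indicator_one hA, lintegral_map (measurable_one.indicator hA) (hm n)]
  · exact fun n => ((measurable_one.indicator hA).comp (hm n)).aemeasurable

lemma tsum_indicator_Ioc (a r : ℝ) :
    ∑' n : ℤ, (Set.Ioc a (a + 1)).indicator (1 : ℝ → ENNReal) (r + n) = 1 := by
  obtain ⟨m, hm, hu⟩ := existsUnique_add_zsmul_mem_Ioc (zero_lt_one' ℝ) r a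
  rw [tsum_eq_single m]
  · simp at hm; simp [hm]
  · intro n hn
    refine Set.indicator_of_notMem (fun h => hn (hu n ?_)) _
    simpa using h

lemma liftMeasure_Ioc_add_one (μ : Measure (AddCircle (1:ℝ))) [IsProbabilityMeasure μ] (a : ℝ) :
    liftMeasure μ (Set.Ioc a (a + 1)) = 1 := by
  rw [liftMeasure_apply μ measurableSet_Ioc]
  simp [tsum_indicator_Ioc]

instance (μ : Measure (AddCircle (1:ℝ))) [IsProbabilityMeasure μ] :
    IsLocallyFiniteMeasure (liftMeasure μ) := by
  refine ⟨fun x => ⟨Set.Ioc (x - 1/2) (x - 1/2 + 1), ?_, ?_⟩⟩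
  · exact Ioc_mem_nhds (by linarith) (by linarith)
  · rw [liftMeasure_Ioc_add_one]; exact ENNReal.one_lt_top

/-- If `F` lifts `T₀`, the lift of a `T₀`-invariant measure is `F`-invariant: the number of points
of `F ⁻¹' A` above `t` is the number of points of `A` above `T₀ t`. -/
lemma liftMeasure_preimage {T₀ : AddCircle (1:ℝ) → AddCircle (1:ℝ)} {F : ℝ → ℝ}
    (hF : Measurable F) (hT : Measurable T₀)
    (hFint : ∀ (x : ℝ) (n : ℤ), F (x + n) = F x + n)
    (hlift : ∀ x : ℝ, T₀ ((x : ℝ) : AddCircle (1:ℝ)) = ((F x : ℝ) : AddCircle (1:ℝ)))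
    {μ : Measure (AddCircle (1:ℝ))} (hinv : μ.map T₀ = μ) {A : Set ℝ} (hA : MeasurableSet A) :
    liftMeasure μ (F ⁻¹' A) = liftMeasure μ A := by
  rw [liftMeasure_apply μ (hF hA), liftMeasure_apply μ hA]
  have hg : Measurable fun t => ∑' n : ℤ, A.indicator (1 : ℝ → ENNReal) (rep t + n) :=
    Measurable.tsum fun n => (measurable_one.indicator hA).comp (measurable_rep.add_const _)
  conv_rhs => rw [← hinv, lintegral_map hg hT]
  refine lintegral_congr fun t => ?_
  obtain ⟨k, hk⟩ : ∃ k : ℤ, F (rep t) = rep (T₀ t) + k := by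
    apply exists_int_of_coe_eq
    rw [coe_rep, ← hlift, coe_rep]
  conv_rhs => rw [← (Equiv.addLeft k).tsum_eq]
  refine tsum_congr fun n => ?_
  classical
  simp only [Set.indicator_apply, Set.mem_preimage, hFint, hk, Equiv.coe_addLeft, Int.cast_add,
    add_assoc, Pi.one_apply]

/-- A measure on the circle is recovered from its lift. -/
lemma liftMeasure_injective {μ μ' : Measure (AddCircle (1:ℝ))}
    (h : liftMeasure μ = liftMeasure μ') : μ = μ' := by
  have key : ∀ (m : Measure (AddCircle (1:ℝ))) (B : Set (AddCircle (1:ℝ))), MeasurableSet B →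
      liftMeasure m ((fun x : ℝ => (x : AddCircle (1:ℝ))) ⁻¹' B ∩ Set.Ioc 0 (0 + 1)) = m B := by
    intro m B hB
    have hB' : MeasurableSet ((fun x : ℝ => (x : AddCircle (1:ℝ))) ⁻¹' B) :=
      AddCircle.measurable_mk' hB
    rw [liftMeasure_apply m (hB'.inter measurableSet_Ioc), ← lintegral_indicator_one hB]
    refine lintegral_congr fun t => ?_
    have hc : ∀ n : ℤ, ((rep t + n : ℝ) : AddCircle (1:ℝ)) = t := fun n => by
      have : ((n : ℝ) : AddCircle (1:ℝ)) = 0 := (AddCircle.coe_eq_zero_iff 1).2 ⟨n, by simp⟩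
      rw [AddCircle.coe_add, this, add_zero, coe_rep]
    have hcount := tsum_indicator_Ioc 0 (rep t)
    classical
    by_cases ht : t ∈ B
    · simpa [Set.indicator_apply, hc, ht] using hcount
    · simp [hc, ht]
  ext B hB
  rw [← key μ B hB, h, key μ' B hB]

/-! ### Distribution functions as semiconjugacies to a translation -/

/-- The distribution function of the lift of `μ`, vanishing at `0`. -/
noncomputable def liftCDF (μ : Measure (AddCircle (1:ℝ))) (x : ℝ) : ℝ :=
  ∫ _ in (0:ℝ)..x, (1:ℝ) ∂(liftMeasure μ)

lemma liftCDF_zero (μ : Measure (AddCircle (1:ℝ))) : liftCDF μ 0 = 0 := by simp [liftCDF]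

section CDF

variable (μ : Measure (AddCircle (1:ℝ))) [IsProbabilityMeasure μ]

lemma liftCDF_sub {a b : ℝ} (hab : a ≤ b) :
    liftCDF μ b - liftCDF μ a = (liftMeasure μ (Set.Ioc a b)).toReal := by
  have hi : ∀ a b : ℝ, IntervalIntegrable (fun _ => (1:ℝ)) (liftMeasure μ) a b := fun a b =>
    intervalIntegrable_const
  rw [liftCDF, liftCDF, intervalIntegral.integral_interval_sub_left (hi _ _) (hi _ _),
    intervalIntegral.integral_of_le hab]
  simp [Measure.real]

lemma liftCDF_mono : Monotone (liftCDF μ) := fun a b hab => by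
  have := liftCDF_sub μ hab
  have h0 : 0 ≤ (liftMeasure μ (Set.Ioc a b)).toReal := ENNReal.toReal_nonneg
  linarith

lemma liftCDF_add_one (x : ℝ) : liftCDF μ (x + 1) = liftCDF μ x + 1 := by
  have := liftCDF_sub μ (show x ≤ x + 1 by linarith)
  rw [liftMeasure_Ioc_add_one] at this
  simp at this
  linarith

end CDF

lemma add_int_of_add_one {H : ℝ → ℝ} (h : ∀ x, H (x + 1) = H x + 1) (x : ℝ) (n : ℤ) :
    H (x + n) = H x + n := by
  have hp : Function.Periodic (fun x => H x - x) 1 := fun x => by simp only [h]; ring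
  have := hp.int_mul n x
  simp only [mul_one] at this
  linarith

lemma iterate_add_const {H F : ℝ → ℝ} {ρ : ℝ} (h : ∀ x, H (F x) = H x + ρ) (n : ℕ) (x : ℝ) :
    H (F^[n] x) = H x + n * ρ := by
  induction n with
  | zero => simp
  | succ n ih => rw [Function.iterate_succ_apply', h, ih]; push_cast; ring

/-- The distribution function semiconjugates `F` to the translation by the rotation number. -/
lemma liftCDF_comp_lift {T₀ : AddCircle (1:ℝ) → AddCircle (1:ℝ)} {F : ℝ → ℝ}
    (hF : Measurable F) (hT : Measurable T₀) (hFmono : StrictMono F)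
    (hFper : ∀ x : ℝ, F (x + 1) = F x + 1)
    (hlift : ∀ x : ℝ, T₀ ((x : ℝ) : AddCircle (1:ℝ)) = ((F x : ℝ) : AddCircle (1:ℝ)))
    {α : ℝ} (hrot : Tendsto (fun n : ℕ => F^[n] 0 / n) atTop (nhds α))
    {μ : Measure (AddCircle (1:ℝ))} [IsProbabilityMeasure μ] (hinv : μ.map T₀ = μ) (x : ℝ) :
    liftCDF μ (F x) = liftCDF μ x + α := by
  have hle : ∀ a b, a ≤ b → liftCDF μ (F b) - liftCDF μ (F a) = liftCDF μ b - liftCDF μ a := by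
    intro a b hab
    rw [liftCDF_sub μ hab, liftCDF_sub μ (hFmono.monotone hab),
      ← liftMeasure_preimage hF hT (add_int_of_add_one hFper) hlift hinv measurableSet_Ioc]
    congr 2
    ext y
    simp [hFmono.lt_iff_lt, hFmono.le_iff_le]
  set ρ := liftCDF μ (F 0) with hρ
  have hconst : ∀ x, liftCDF μ (F x) = liftCDF μ x + ρ := by
    intro x
    have h0 := liftCDF_zero μ
    rcases le_total 0 x with h | h
    · have := hle _ _ h; linarith
    · have := hle _ _ h; linarith
  have hint : ∀ n : ℤ, liftCDF μ n = n := fun n => by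
    have := add_int_of_add_one (liftCDF_add_one μ) 0 n
    simpa [liftCDF_zero] using this
  have hbdd : ∀ y, |liftCDF μ y - y| ≤ 1 := by
    intro y
    have h1 := liftCDF_mono μ (Int.floor_le y)
    have h2 := liftCDF_mono μ (Int.le_ceil y)
    rw [hint] at h1 h2
    have h3 := Int.lt_floor_add_one y
    have h4 := Int.ceil_lt_add_one y
    rw [abs_le]
    constructor <;> linarith
  -- Since `liftCDF μ (F^[n] 0) = n ρ`, the bound above gives `|ρ - F^[n] 0 / n| ≤ 1 / n`.
  have hlim : Tendsto (fun n : ℕ => F^[n] 0 / n) atTop (nhds ρ) := by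
    rw [tendsto_iff_dist_tendsto_zero]
    refine squeeze_zero' (Eventually.of_forall fun n => dist_nonneg) ?_
      (tendsto_const_div_atTop_nhds_zero_nat (1:ℝ))
    filter_upwards [eventually_gt_atTop 0] with n hn
    have hn' : (0:ℝ) < n := by exact_mod_cast hn
    have h1 := hbdd (F^[n] 0)
    rw [iterate_add_const hconst n 0, liftCDF_zero, zero_add] at h1
    rw [Real.dist_eq, le_div_iff₀ hn', abs_sub_comm]
    calc |ρ - F^[n] 0 / n| * n = |(ρ - F^[n] 0 / n) * n| := by rw [abs_mul, abs_of_pos hn']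
      _ = |n * ρ - F^[n] 0| := by congr 1; field_simp
      _ ≤ 1 := h1
  rw [hconst, tendsto_nhds_unique hlim hrot]

/-! ### Unique ergodicity -/

lemma exists_nat_mul_add_int_mem_Ioo {α : ℝ} (hα : Irrational α) {u v : ℝ} (huv : u < v) :
    ∃ (n : ℕ) (m : ℤ), (n * α + m : ℝ) ∈ Set.Ioo u v := by
  have hd : DenseRange (fun n : ℕ => n • (α : AddCircle (1:ℝ))) := by
    rw [← denseRange_zsmul_iff_nsmul, AddCircle.denseRange_zsmul_coe_iff]
    simpa using hα
  have hopen : IsOpen ((fun x : ℝ => (x : AddCircle (1:ℝ))) '' Set.Ioo u v) :=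
    QuotientAddGroup.isOpenMap_coe _ isOpen_Ioo
  obtain ⟨n, y, hy, hyn⟩ := hd.exists_mem_open hopen ((Set.nonempty_Ioo.2 huv).image _)
  have hyn' : ((y : ℝ) : AddCircle (1:ℝ)) = ((n * α : ℝ) : AddCircle (1:ℝ)) := by
    simpa using hyn
  obtain ⟨m, hm⟩ := exists_int_of_coe_eq hyn'
  exact ⟨n, m, hm ▸ hy⟩

/-- Two monotone degree-one semiconjugacies of `F` to an irrational translation are ordered, hence
equal by symmetry: they take the same values `n α + m` at the points `F^[n] 0 + m`, and these values
are dense. -/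
lemma le_of_monotone_semiconj {F H H' : ℝ → ℝ} {α : ℝ} (hα : Irrational α)
    (hH : Monotone H) (hH1 : ∀ x, H (x + 1) = H x + 1) (hHF : ∀ x, H (F x) = H x + α)
    (hH0 : H 0 = 0)
    (hH' : Monotone H') (hH1' : ∀ x, H' (x + 1) = H' x + 1) (hHF' : ∀ x, H' (F x) = H' x + α)
    (hH0' : H' 0 = 0) (x : ℝ) : H x ≤ H' x := by
  by_contra! hlt
  obtain ⟨n, m, h1, h2⟩ := exists_nat_mul_add_int_mem_Ioo hα hlt
  have e : H (F^[n] 0 + m) = n * α + m := by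
    rw [add_int_of_add_one hH1, iterate_add_const hHF, hH0, zero_add]
  have e' : H' (F^[n] 0 + m) = n * α + m := by
    rw [add_int_of_add_one hH1', iterate_add_const hHF', hH0', zero_add]
  rcases le_total (F^[n] 0 + m) x with h | h
  · have := hH' h; linarith
  · have := hH h; linarith

/-- Unique ergodicity of circle homeomorphisms with irrational rotation number. -/
lemma invariant_measure_unique {T₀ : AddCircle (1:ℝ) → AddCircle (1:ℝ)} {F : ℝ → ℝ}
    (hF : Measurable F) (hT : Measurable T₀) (hFmono : StrictMono F)
    (hFper : ∀ x : ℝ, F (x + 1) = F x + 1)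
    (hlift : ∀ x : ℝ, T₀ ((x : ℝ) : AddCircle (1:ℝ)) = ((F x : ℝ) : AddCircle (1:ℝ)))
    {α : ℝ} (hα : Irrational α) (hrot : Tendsto (fun n : ℕ => F^[n] 0 / n) atTop (nhds α))
    {μ μ' : Measure (AddCircle (1:ℝ))} [IsProbabilityMeasure μ] [IsProbabilityMeasure μ']
    (hinv : μ.map T₀ = μ) (hinv' : μ'.map T₀ = μ') : μ = μ' := by
  have hs := liftCDF_comp_lift hF hT hFmono hFper hlift hrot hinv
  have hs' := liftCDF_comp_lift hF hT hFmono hFper hlift hrot hinv'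
  have heq : ∀ x, liftCDF μ x = liftCDF μ' x := fun x => le_antisymm
    (le_of_monotone_semiconj hα (liftCDF_mono μ) (liftCDF_add_one μ) hs (liftCDF_zero μ)
      (liftCDF_mono μ') (liftCDF_add_one μ') hs' (liftCDF_zero μ') x)
    (le_of_monotone_semiconj hα (liftCDF_mono μ') (liftCDF_add_one μ') hs' (liftCDF_zero μ')
      (liftCDF_mono μ) (liftCDF_add_one μ) hs (liftCDF_zero μ) x)
  refine liftMeasure_injective (Measure.ext_of_Ioc _ _ fun a b hab => ?_)
  rw [← ENNReal.toReal_eq_toReal_iff' measure_Ioc_lt_top.ne measure_Ioc_lt_top.ne,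
    ← liftCDF_sub μ hab.le, ← liftCDF_sub μ' hab.le, heq, heq]

/-! ### Weak limits of invariant measures -/

lemma continuous_of_lift {T₀ : AddCircle (1:ℝ) → AddCircle (1:ℝ)} {F : ℝ → ℝ}
    (hF : Continuous F)
    (hlift : ∀ x : ℝ, T₀ ((x : ℝ) : AddCircle (1:ℝ)) = ((F x : ℝ) : AddCircle (1:ℝ))) :
    Continuous T₀ := by
  refine (QuotientAddGroup.isQuotientMap_mk (N := AddSubgroup.zmultiples (1:ℝ))).continuous_iff.2 ?_
  exact ((AddCircle.continuous_mk' (1:ℝ)).comp hF).congr fun x => (hlift x).symm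

/-- A weak limit, along maps converging uniformly to `T₀`, of invariant probability measures is
`T₀`-invariant. -/
lemma invariant_of_tendsto {X ι : Type*} [MetricSpace X] [CompactSpace X] [MeasurableSpace X]
    [BorelSpace X] {T₀ : X → X} (hT₀ : Continuous T₀) {l : Filter ι} [l.NeBot] {T : ι → X → X}
    {ε : ι → ℝ} (hε : Tendsto ε l (𝓝 0)) (hclose : ∀ᶠ i in l, ∀ x, dist (T₀ x) (T i x) ≤ ε i)
    (hmeas : ∀ᶠ i in l, Measurable (T i)) {μ : ι → ProbabilityMeasure X}
    (hinv : ∀ᶠ i in l, (μ i : Measure X).map (T i) = μ i) {P : ProbabilityMeasure X}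
    (hP : Tendsto μ l (𝓝 P)) : (P : Measure X).map T₀ = P := by
  have : IsProbabilityMeasure ((P : Measure X).map T₀) :=
    Measure.isProbabilityMeasure_map hT₀.measurable.aemeasurable
  rw [ProbabilityMeasure.tendsto_iff_forall_integral_tendsto] at hP
  refine ext_of_forall_integral_eq_of_IsFiniteMeasure fun f => ?_
  rw [integral_map hT₀.measurable.aemeasurable f.continuous.aestronglyMeasurable]
  have h1 := hP f
  have h2 := hP (f.compContinuous ⟨T₀, hT₀⟩)
  refine (sub_eq_zero.1 (tendsto_nhds_unique (h2.sub h1) ?_))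
  have hu : UniformContinuous f := CompactSpace.uniformContinuous_of_continuous f.continuous
  rw [Metric.tendsto_nhds]
  intro η hη
  obtain ⟨r, hr, hfr⟩ := Metric.uniformContinuous_iff.1 hu (η / 2) (half_pos hη)
  filter_upwards [hclose, hmeas, hinv, hε.eventually_lt_const hr] with i hc hm hi hlt
  have e : ∫ x, f x ∂(μ i : Measure X) = ∫ x, f (T i x) ∂(μ i : Measure X) := by
    conv_lhs => rw [← hi]
    rw [integral_map hm.aemeasurable f.continuous.aestronglyMeasurable]
  have i1 : Integrable (fun x => f (T₀ x)) (μ i : Measure X) :=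
    (f.compContinuous ⟨T₀, hT₀⟩).integrable _
  have i2 : Integrable (fun x => f (T i x)) (μ i : Measure X) := by
    refine Integrable.comp_measurable ?_ hm
    rw [hi]
    exact f.integrable _
  simp only [BoundedContinuousFunction.compContinuous_apply, ContinuousMap.coe_mk]
  rw [dist_zero_right, e, ← integral_sub i1 i2]
  refine lt_of_le_of_lt (norm_integral_le_of_norm_le_const (C := η / 2)
    (Eventually.of_forall fun x => ?_)) ?_
  · rw [← dist_eq_norm]
    exact (hfr ((hc x).trans_lt hlt)).le
  · simpa using half_lt_self hη

end CircleStability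

/-- **Statistical stability of circle diffeomorphisms (Denjoy setting).**
Let `T₀` be an orientation-preserving `C¹` diffeomorphism of the circle, given by a lift
`F : ℝ → ℝ` (`C¹`, strictly monotone, `F(x+1) = F(x)+1`, `F' > 0`), whose rotation
number `α = lim F^n(0)/n` is irrational, and such that `log F'` has bounded variation
on `[0,1]`.  Let `μ₀` be a `T₀`-invariant Borel probability measure (it is unique by
Denjoy's theorem).  If `T_δ`, `δ ∈ (0, δ̄]`, are Borel measurable maps with
`sup_x d(T₀ x, T_δ x) ≤ δ` and `μ_δ` are `T_δ`-invariant Borel probability measures,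
then `∫ f dμ_δ → ∫ f dμ₀` as `δ → 0`, for every continuous `f : 𝕊¹ → ℝ`. -/
theorem statistical_stability_circle_diffeo
    (T₀ : AddCircle (1:ℝ) → AddCircle (1:ℝ)) (F : ℝ → ℝ)
    (hFreg : ContDiff ℝ 1 F)
    (hFmono : StrictMono F)
    (hFper : ∀ x : ℝ, F (x + 1) = F x + 1)
    (hF' : ∀ x : ℝ, 0 < deriv F x)
    (hlift : ∀ x : ℝ, T₀ ((x : ℝ) : AddCircle (1:ℝ)) = ((F x : ℝ) : AddCircle (1:ℝ)))
    (hbij : Function.Bijective T₀)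
    (α : ℝ) (hα : Irrational α)
    (hrot : Tendsto (fun n : ℕ => F^[n] 0 / n) atTop (nhds α))
    (hBV : BoundedVariationOn (fun x => Real.log (deriv F x)) (Set.Icc (0:ℝ) 1))
    (μ₀ : Measure (AddCircle (1:ℝ))) (hμ₀prob : IsProbabilityMeasure μ₀)
    (hμ₀inv : Measure.map T₀ μ₀ = μ₀)
    (δbar : ℝ) (hδbar : 0 < δbar)
    (T : ℝ → AddCircle (1:ℝ) → AddCircle (1:ℝ))
    (hmeas : ∀ δ ∈ Set.Ioc (0:ℝ) δbar, Measurable (T δ))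
    (hclose : ∀ δ ∈ Set.Ioc (0:ℝ) δbar, ∀ x, dist (T₀ x) (T δ x) ≤ δ)
    (μ : ℝ → Measure (AddCircle (1:ℝ)))
    (hprob : ∀ δ ∈ Set.Ioc (0:ℝ) δbar, IsProbabilityMeasure (μ δ))
    (hinv : ∀ δ ∈ Set.Ioc (0:ℝ) δbar, Measure.map (T δ) (μ δ) = μ δ) :
    ∀ f : AddCircle (1:ℝ) → ℝ, Continuous f →
      Tendsto (fun δ => ∫ x, f x ∂(μ δ)) (nhdsWithin 0 (Set.Ioc 0 δbar))
        (nhds (∫ x, f x ∂μ₀)) := by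
  intro f hf
  have hTc : Continuous T₀ := CircleStability.continuous_of_lift hFreg.continuous hlift
  -- Extended by `μ₀` to every `δ`, so that the `μ δ` become points of the compact space of
  -- probability measures.
  let P₀ : ProbabilityMeasure (AddCircle (1:ℝ)) := ⟨μ₀, hμ₀prob⟩
  classical
  let Q : ℝ → ProbabilityMeasure (AddCircle (1:ℝ)) := fun δ =>
    if h : δ ∈ Set.Ioc (0:ℝ) δbar then ⟨μ δ, hprob δ h⟩ else P₀
  have hQ : ∀ δ ∈ Set.Ioc (0:ℝ) δbar, (Q δ : Measure (AddCircle (1:ℝ))) = μ δ := fun δ hδ =>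
    congrArg ProbabilityMeasure.toMeasure (dif_pos hδ)
  suffices hlim : Tendsto Q (nhdsWithin 0 (Set.Ioc 0 δbar)) (𝓝 P₀) by
    have := (ProbabilityMeasure.tendsto_iff_forall_integral_tendsto.1 hlim)
      (BoundedContinuousFunction.mkOfCompact ⟨f, hf⟩)
    refine this.congr' ?_
    filter_upwards [self_mem_nhdsWithin] with δ hδ
    rw [hQ δ hδ]
    rfl
  rw [tendsto_iff_ultrafilter]
  intro g hg
  have hmem : ∀ᶠ δ in (g : Filter ℝ), δ ∈ Set.Ioc (0:ℝ) δbar := hg self_mem_nhdsWithin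
  obtain ⟨P, -, hP⟩ := isCompact_univ.ultrafilter_le_nhds (g.map Q) (by simp)
  have hP' : Tendsto Q g (𝓝 P) := hP
  have hPinv : (P : Measure (AddCircle (1:ℝ))).map T₀ = P := by
    refine CircleStability.invariant_of_tendsto hTc (ε := id) (T := T)
      (tendsto_id.mono_left (hg.trans nhdsWithin_le_nhds)) (hmem.mono hclose) (hmem.mono hmeas) ?_
      hP'
    filter_upwards [hmem] with δ hδ
    rw [hQ δ hδ, hinv δ hδ]
  have hPμ : (P : Measure (AddCircle (1:ℝ))) = μ₀ :=
    CircleStability.invariant_measure_unique hFreg.continuous.measurable hTc.measurable hFmono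
      hFper hlift hα hrot hPinv hμ₀inv
  have hPP : P = P₀ := Subtype.ext hPμ
  exact hPP ▸ hP'
end
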